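/- arXiv:1309.3014 — 6 statements merged into one kernel-verified Lean document; each statement's English description precedes it below -/
import Mathlib

section
/- For every δ ∈ (0,1) there exists a constant C > 0 (depending only on δ) such that for all n ≥ 1, all x ∈ F₂ⁿ and all f : F₂ⁿ → ℝ with f ≥ 0 pointwise: T_δ f(x) ≤ C√n · N_δ f(x), i.e., the spherical average is pointwise dominated by C√n times the Bernoulli noise average. -/
/-!
For `f ≥ 0`, keeping only the terms `|y| = m` of the noise average shows that the average of `f`
over a sphere of radius `m` is at most `N_δ f` divided by the point probability
`C(n, m) δ ^ m (1 - δ) ^ (n - m)`. It remains to see that this probability is at least of order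
`1 / √n` for `m = δn + O(1)`. Up to a factor `exp (-n D(m / n ‖ δ))`, where `D` is the
Kullback-Leibler divergence, it is `C(n, m) (m / n) ^ m (1 - m / n) ^ (n - m)`, which is at least of
order `1 / √n` by Stirling's formula. Finally `D` is at most the `χ²`-divergence, so that
`n D(m / n ‖ δ) ≤ (m - δn) ^ 2 / (nδ(1 - δ))` stays bounded.
-/

open Finset

/-- Radius of the sphere used by `T_δ`: `⌈δn⌉` if `δ < 1/2`, else `⌊δn⌋`. -/
noncomputable def sphereRadius (n : ℕ) (δ : ℝ) : ℕ :=
  if δ < 1 / 2 then ⌈δ * n⌉₊ else ⌊δ * n⌋₊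

/-- The spherical averaging operator `T_δ` (real-valued functions). -/
noncomputable def sphereAvgR (n : ℕ) (δ : ℝ) (f : (Fin n → ZMod 2) → ℝ) :
    (Fin n → ZMod 2) → ℝ := fun x =>
  ((n.choose (sphereRadius n δ) : ℝ))⁻¹ *
    ∑ y ∈ univ.filter (fun y : Fin n → ZMod 2 => hammingNorm y = sphereRadius n δ),
      f (x + y)

/-- The Bernoulli noise operator `N_δ`. -/
noncomputable def noiseAvgR (n : ℕ) (δ : ℝ) (f : (Fin n → ZMod 2) → ℝ) :
    (Fin n → ZMod 2) → ℝ := fun x =>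
  ∑ y : Fin n → ZMod 2, δ ^ hammingNorm y * (1 - δ) ^ (n - hammingNorm y) * f (x + y)

section PointProbability

open Real
open scoped Nat

lemma factorial_le_exp_mul_sqrt_mul_pow {n : ℕ} (hn : n ≠ 0) :
    (n ! : ℝ) ≤ exp 1 * √n * (n / exp 1) ^ n := by
  obtain ⟨k, rfl⟩ := Nat.exists_eq_succ_of_ne_zero hn
  have stirlingSeq_le : Stirling.stirlingSeq (k + 1) ≤ Stirling.stirlingSeq 1 :=
    Stirling.stirlingSeq'_antitone k.zero_le
  rw [Stirling.stirlingSeq_one, Stirling.stirlingSeq, div_le_iff₀ (by positivity),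
    Real.sqrt_mul zero_le_two] at stirlingSeq_le
  refine stirlingSeq_le.trans_eq ?_
  field_simp

lemma factorial_le_exp_mul_sqrt_add_one_mul_pow (n : ℕ) :
    (n ! : ℝ) ≤ exp 1 * √(n + 1) * (n / exp 1) ^ n := by
  obtain rfl | hn := eq_or_ne n 0
  · simp
  · refine (factorial_le_exp_mul_sqrt_mul_pow hn).trans ?_
    gcongr
    linarith

lemma sqrt_add_one_mul_sqrt_add_one_le {m k n : ℕ} (hmk : m + k = n) (hn : n ≠ 0) :
    √(m + 1) * √(k + 1) ≤ √n * √(2 * π * n) := by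
  have product_le : (m + 1) * (k + 1) ≤ 2 * n * (2 * n) := by gcongr <;> lia
  rw [← Real.sqrt_mul (by positivity), ← Real.sqrt_mul (by positivity)]
  refine Real.sqrt_le_sqrt ?_
  calc ((m : ℝ) + 1) * (k + 1)
    _ ≤ 2 * n * (2 * n) := mod_cast product_le
    _ ≤ n * (2 * π * n) := by nlinarith [pi_gt_three, sq_nonneg (n : ℝ)]

lemma factorial_mul_factorial_mul_pow_le {m k n : ℕ} (hmk : m + k = n) (hn : n ≠ 0) :
    (m ! * k ! : ℝ) * (n / exp 1) ^ n ≤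
      exp 1 ^ 2 * √n * n ! * ((m / exp 1) ^ m * (k / exp 1) ^ k) :=
  calc (m ! * k ! : ℝ) * (n / exp 1) ^ n
    _ ≤ (exp 1 * √(m + 1) * (m / exp 1) ^ m) * (exp 1 * √(k + 1) * (k / exp 1) ^ k) *
        (n / exp 1) ^ n := by
      gcongr <;> exact factorial_le_exp_mul_sqrt_add_one_mul_pow _
    _ = exp 1 ^ 2 * (√(m + 1) * √(k + 1)) * (n / exp 1) ^ n *
        ((m / exp 1) ^ m * (k / exp 1) ^ k) := by ring
    _ ≤ exp 1 ^ 2 * (√n * √(2 * π * n)) * (n / exp 1) ^ n *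
        ((m / exp 1) ^ m * (k / exp 1) ^ k) := by
      gcongr exp 1 ^ 2 * ?_ * _ * _
      exact sqrt_add_one_mul_sqrt_add_one_le hmk hn
    _ = exp 1 ^ 2 * √n * (√(2 * π * n) * (n / exp 1) ^ n) *
        ((m / exp 1) ^ m * (k / exp 1) ^ k) := by ring
    _ ≤ exp 1 ^ 2 * √n * n ! * ((m / exp 1) ^ m * (k / exp 1) ^ k) := by
      gcongr
      exact Stirling.le_factorial_stirling n

lemma pow_self_le_exp_mul_sqrt_mul_choose {m k n : ℕ} (hmk : m + k = n) (hn : n ≠ 0) :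
    (n : ℝ) ^ n ≤ exp 1 ^ 2 * √n * n.choose m * (m ^ m * k ^ k) := by
  have factorial_mul_le := factorial_mul_factorial_mul_pow_le hmk hn
  subst hmk
  rw [Nat.cast_add_choose]
  simp only [div_pow, pow_add] at factorial_mul_le ⊢
  field_simp at factorial_mul_le ⊢
  linarith

lemma pow_le_pow_mul_exp {x a : ℝ} (hx : 0 ≤ x) (ha : 0 < a) (n : ℕ) :
    x ^ n ≤ a ^ n * exp (n * (x / a - 1)) := by
  have le_mul_exp : x ≤ a * exp (x / a - 1) := by
    rw [← div_le_iff₀' ha]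
    simpa using add_one_le_exp (x / a - 1)
  calc x ^ n ≤ (a * exp (x / a - 1)) ^ n := by gcongr
    _ = a ^ n * exp (n * (x / a - 1)) := by rw [mul_pow, ← exp_nat_mul]

/-- Dividing by `n ^ n` and taking logarithms, this bounds the Kullback-Leibler divergence of
Bernoulli distributions by their `χ²`-divergence. -/
lemma pow_self_mul_pow_self_le {m k n : ℕ} (hmk : m + k = n) (hn : n ≠ 0) {p : ℝ} (hp₀ : 0 < p)
    (hp₁ : p < 1) :
    (m ^ m * k ^ k : ℝ) ≤
      n ^ n * (p ^ m * (1 - p) ^ k) * exp ((m - p * n) ^ 2 / (n * (p * (1 - p)))) := by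
  have hq : 0 < 1 - p := sub_pos.mpr hp₁
  have exponent_eq : m * (m / (n * p) - 1) + k * (k / (n * (1 - p)) - 1) =
      (m - p * n) ^ 2 / (n * (p * (1 - p))) := by
    have hk : (k : ℝ) = n - m := by rw [← hmk]; push_cast; ring
    rw [hk]
    field_simp
    ring
  calc (m ^ m * k ^ k : ℝ)
    _ ≤ ((n * p) ^ m * exp (m * (m / (n * p) - 1))) *
        ((n * (1 - p)) ^ k * exp (k * (k / (n * (1 - p)) - 1))) := by
      gcongr <;> exact pow_le_pow_mul_exp (by positivity) (by positivity) _
    _ = n ^ (m + k) * (p ^ m * (1 - p) ^ k) *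
        exp (m * (m / (n * p) - 1) + k * (k / (n * (1 - p)) - 1)) := by
      rw [exp_add, pow_add, mul_pow, mul_pow]
      ring
    _ = n ^ n * (p ^ m * (1 - p) ^ k) * exp ((m - p * n) ^ 2 / (n * (p * (1 - p)))) := by
      rw [hmk, exponent_eq]

lemma inv_choose_le_sqrt_mul_pow_mul_pow {m n : ℕ} (hm : m ≤ n) (hn : n ≠ 0) {p : ℝ} (hp₀ : 0 < p)
    (hp₁ : p < 1) :
    (n.choose m : ℝ)⁻¹ ≤ exp 1 ^ 2 * exp ((m - p * n) ^ 2 / (n * (p * (1 - p)))) * √n *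
      (p ^ m * (1 - p) ^ (n - m)) := by
  have hmk : m + (n - m) = n := Nat.add_sub_cancel' hm
  have hchoose : 0 < (n.choose m : ℝ) := mod_cast Nat.choose_pos hm
  have hpow : 0 < (n : ℝ) ^ n := by positivity
  rw [inv_le_iff_one_le_mul₀ hchoose]
  refine le_of_mul_le_mul_left ?_ hpow
  calc (n : ℝ) ^ n * 1
    _ ≤ exp 1 ^ 2 * √n * n.choose m * (m ^ m * (n - m : ℕ) ^ (n - m)) := by
      simpa using pow_self_le_exp_mul_sqrt_mul_choose hmk hn
    _ ≤ exp 1 ^ 2 * √n * n.choose m * (n ^ n * (p ^ m * (1 - p) ^ (n - m)) *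
        exp ((m - p * n) ^ 2 / (n * (p * (1 - p))))) := by
      gcongr _ * ?_
      exact pow_self_mul_pow_self_le hmk hn hp₀ hp₁
    _ = _ := by ring

end PointProbability

section Operators

variable {n : ℕ} {δ : ℝ}

lemma sphereRadius_le (hδ : δ ≤ 1) : sphereRadius n δ ≤ n := by
  have hle : δ * n ≤ n := mul_le_of_le_one_left n.cast_nonneg hδ
  unfold sphereRadius
  split_ifs
  · exact Nat.ceil_le.mpr hle
  · exact Nat.floor_le_of_le hle

lemma abs_sphereRadius_sub_le_one (hδ : 0 ≤ δ) : |(sphereRadius n δ : ℝ) - δ * n| ≤ 1 := by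
  have hnonneg : 0 ≤ δ * n := by positivity
  rw [abs_le, sphereRadius]
  split_ifs
  · constructor <;> linarith [Nat.le_ceil (δ * n), Nat.ceil_lt_add_one hnonneg]
  · constructor <;> linarith [Nat.floor_le hnonneg, Nat.lt_floor_add_one (δ * n)]

lemma sq_sphereRadius_sub_div_le (hn : n ≠ 0) (hδ₀ : 0 < δ) (hδ₁ : δ < 1) :
    ((sphereRadius n δ : ℝ) - δ * n) ^ 2 / (n * (δ * (1 - δ))) ≤ 1 / (δ * (1 - δ)) := by
  have hvar : 0 < δ * (1 - δ) := mul_pos hδ₀ (sub_pos.mpr hδ₁)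
  have hn_one : (1 : ℝ) ≤ n := mod_cast Nat.one_le_iff_ne_zero.mpr hn
  exact div_le_div₀ zero_le_one
    ((sq_le_one_iff_abs_le_one _).mpr (abs_sphereRadius_sub_le_one hδ₀.le)) hvar
    (le_mul_of_one_le_left hvar.le hn_one)

lemma inv_choose_sphereRadius_le (hn : n ≠ 0) (hδ₀ : 0 < δ) (hδ₁ : δ < 1) :
    (n.choose (sphereRadius n δ) : ℝ)⁻¹ ≤ Real.exp 1 ^ 2 * Real.exp (1 / (δ * (1 - δ))) * √n *
      (δ ^ sphereRadius n δ * (1 - δ) ^ (n - sphereRadius n δ)) := by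
  refine (inv_choose_le_sqrt_mul_pow_mul_pow (sphereRadius_le hδ₁.le) hn hδ₀ hδ₁).trans ?_
  gcongr _ * Real.exp ?_ * _ * _
  exact sq_sphereRadius_sub_div_le hn hδ₀ hδ₁

lemma pow_mul_pow_mul_sum_sphere_le_noiseAvgR (hδ₀ : 0 ≤ δ) (hδ₁ : δ ≤ 1)
    {f : (Fin n → ZMod 2) → ℝ} (hf : ∀ y, 0 ≤ f y) (x : Fin n → ZMod 2) (m : ℕ) :
    δ ^ m * (1 - δ) ^ (n - m) * ∑ y with hammingNorm y = m, f (x + y) ≤ noiseAvgR n δ f x :=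
  calc δ ^ m * (1 - δ) ^ (n - m) * ∑ y with hammingNorm y = m, f (x + y)
    _ = ∑ y with hammingNorm y = m,
        δ ^ hammingNorm y * (1 - δ) ^ (n - hammingNorm y) * f (x + y) := by
      rw [mul_sum]
      refine sum_congr rfl fun y hy ↦ ?_
      rw [(mem_filter.mp hy).2]
    _ ≤ noiseAvgR n δ f x :=
      sum_le_univ_sum_of_nonneg fun y ↦
        mul_nonneg (mul_nonneg (pow_nonneg hδ₀ _) (pow_nonneg (sub_nonneg.mpr hδ₁) _)) (hf _)

end Operators

theorem spherical_pointwise_dominated_by_noise :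
    ∀ δ : ℝ, 0 < δ → δ < 1 →
      ∃ C : ℝ, 0 < C ∧
        ∀ n : ℕ, 1 ≤ n → ∀ f : (Fin n → ZMod 2) → ℝ, (∀ y, 0 ≤ f y) →
          ∀ x : Fin n → ZMod 2,
            sphereAvgR n δ f x ≤ C * Real.sqrt n * noiseAvgR n δ f x := by
  intro δ hδ₀ hδ₁
  let C := Real.exp 1 ^ 2 * Real.exp (1 / (δ * (1 - δ)))
  refine ⟨C, by positivity, fun n hn f hf x ↦ ?_⟩
  let m := sphereRadius n δ
  have inv_choose_le : (n.choose m : ℝ)⁻¹ ≤ C * √n * (δ ^ m * (1 - δ) ^ (n - m)) :=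
    inv_choose_sphereRadius_le (Nat.one_le_iff_ne_zero.mp hn) hδ₀ hδ₁
  calc sphereAvgR n δ f x
    _ ≤ C * √n * (δ ^ m * (1 - δ) ^ (n - m)) * ∑ y with hammingNorm y = m, f (x + y) :=
      mul_le_mul_of_nonneg_right inv_choose_le (sum_nonneg fun y _ ↦ hf _)
    _ ≤ C * √n * noiseAvgR n δ f x := by
      rw [mul_assoc]
      gcongr
      exact pow_mul_pow_mul_sum_sphere_le_noiseAvgR hδ₀.le hδ₁.le hf x m
end

section
/- For every ε ∈ (0, 1/2] there exist constants C₁, C₂ > 0 such that for every n ≥ 1, every integer j with εn ≤ j ≤ (1−ε)n, every λ > 0, and every nonzero φ : F₂ⁿ → ℝ with φ ≥ 0: if (φ*φ, 1_{S_j}) / |S_j| ≥ λ‖φ‖₂², then ‖φ‖₂² / ‖φ‖₁² ≤ (1/C₁) · λ^{−C₂}. -/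
open Finset

/-- Normalized `L_p` norm on the Hamming cube (real-valued functions). -/
noncomputable def pnormR (n : ℕ) (p : ℝ) (f : (Fin n → ZMod 2) → ℝ) : ℝ :=
  ((2 : ℝ) ^ (-(n : ℝ)) * ∑ x : Fin n → ZMod 2, |f x| ^ p) ^ (1 / p)

/-- Normalized inner product `(f,g) = 2^{-n} Σ_x f(x) g(x)`. -/
noncomputable def innerP (n : ℕ) (f g : (Fin n → ZMod 2) → ℝ) : ℝ :=
  ((2 : ℝ) ^ n)⁻¹ * ∑ x : Fin n → ZMod 2, f x * g x

/-- Convolution `(f*g)(x) = Σ_y f(x+y) g(y)`. -/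
def conv (n : ℕ) (f g : (Fin n → ZMod 2) → ℝ) : (Fin n → ZMod 2) → ℝ :=
  fun x => ∑ y : Fin n → ZMod 2, f (x + y) * g y

/-- Indicator function of the Hamming sphere `S_j`. -/
def sphereInd (n j : ℕ) : (Fin n → ZMod 2) → ℝ :=
  fun x => if hammingNorm x = j then 1 else 0

/-!
By Fourier expansion, `(φ * φ, 1_{S_j}) = ∑ S, φ̂(S)² K_j(|S|)`, where `K_j` is the Krawtchouk
polynomial. For `ε n ≤ j ≤ (1 - ε) n` the ratio `K_j(s) / C(n, j)` decays exponentially in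
`min s (n - s)`: for `t ≤ min s (n - s)` the generating function `(1 - X)^s (1 + X)^(n - s)`
contains the factor `(1 - X²)^t`, hence is dominated coefficientwise by
`(1 + X²)^t (1 + X)^(n - 2t)`, and each replacement of `(1 + X)²` by `1 + X²` shrinks the
coefficient of `X^j` by a constant factor as long as `t` is at most a small multiple of `ε n`.

The pairing is therefore controlled by the noise stabilities of `φ` and of its twist by the full
character `walsh univ`, which exchanges `S` and `Sᶜ`. At noise rate `1/3` Bonami's inequality bounds
the stability by `‖φ‖₁ ‖φ‖₂`; Hölder's inequality interpolates between this and Parseval's identity,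
giving `λ ‖φ‖₂² ≤ 4 ‖φ‖₁^θ ‖φ‖₂^(2 - θ)` with `θ = ε³ / 8`.
-/

open scoped BigOperators

section Walsh

variable {ι : Type*}

/-- The nontrivial character `a ↦ (-1) ^ a` of `𝔽₂`. -/
noncomputable def signChar : AddChar (ZMod 2) ℝ :=
  AddChar.zmodChar 2 (ζ := -1) (by norm_num)

lemma signChar_one : signChar 1 = -1 := by
  simp [signChar, AddChar.zmodChar_apply, ZMod.val_one]

lemma signChar_mul_self (a : ZMod 2) : signChar a * signChar a = 1 := by
  rw [← AddChar.map_add_eq_mul, CharTwo.add_self_eq_zero, AddChar.map_zero_eq_one]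

lemma signChar_mul_signChar_of_ne {a b : ZMod 2} (h : a ≠ b) : signChar a * signChar b = -1 := by
  have hab : a + b = 1 := by revert a b; decide
  rw [← AddChar.map_add_eq_mul, hab, signChar_one]

/-- The Walsh function `x ↦ (-1) ^ (∑ i ∈ S, x i)`, the character of `𝔽₂^ι` indexed by `S`. -/
noncomputable def walsh (S : Finset ι) (x : ι → ZMod 2) : ℝ :=
  ∏ i ∈ S, signChar (x i)

lemma walsh_add (S : Finset ι) (x y : ι → ZMod 2) : walsh S (x + y) = walsh S x * walsh S y := by
  simp only [walsh, Pi.add_apply, AddChar.map_add_eq_mul, prod_mul_distrib]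

lemma walsh_mul_self (S : Finset ι) (x : ι → ZMod 2) : walsh S x * walsh S x = 1 := by
  simp only [walsh, ← prod_mul_distrib, signChar_mul_self, prod_const_one]

lemma abs_walsh (S : Finset ι) (x : ι → ZMod 2) : |walsh S x| = 1 := by
  rw [← abs_one, ← sq_eq_sq_iff_abs_eq_abs, sq, walsh_mul_self, one_pow]

lemma sum_walsh_mul_walsh [Fintype ι] (x y : ι → ZMod 2) :
    ∑ S : Finset ι, walsh S x * walsh S y = if x = y then (2 : ℝ) ^ Fintype.card ι else 0 := by
  have hprod : ∑ S : Finset ι, walsh S x * walsh S y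
      = ∏ i, (1 + signChar (x i) * signChar (y i)) := by
    simp only [walsh, ← prod_mul_distrib, prod_one_add, powerset_univ]
  rw [hprod]
  split_ifs with h
  · simp only [h, signChar_mul_self, one_add_one_eq_two, prod_const, card_univ]
  · obtain ⟨i, hi⟩ := Function.ne_iff.mp h
    exact prod_eq_zero (mem_univ i) (by rw [signChar_mul_signChar_of_ne hi, add_neg_cancel])

variable [DecidableEq ι]

lemma walsh_insert {i : ι} {S : Finset ι} (h : i ∉ S) (x : ι → ZMod 2) :
    walsh (insert i S) x = signChar (x i) * walsh S x :=
  prod_insert h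

lemma walsh_periodic_single {i : ι} {S : Finset ι} (h : i ∉ S) :
    Function.Periodic (walsh S) (Pi.single i 1) := by
  refine fun x => prod_congr rfl fun k hk => ?_
  rw [Pi.add_apply, Pi.single_eq_of_ne (ne_of_mem_of_not_mem hk h), add_zero]

variable [Fintype ι]

lemma walsh_univ_mul_walsh (S : Finset ι) (x : ι → ZMod 2) :
    walsh univ x * walsh S x = walsh Sᶜ x := by
  have hsplit : walsh univ x = walsh S x * walsh Sᶜ x := (prod_mul_prod_compl S _).symm
  rw [hsplit, mul_right_comm, walsh_mul_self, one_mul]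

/-- The Walsh–Fourier coefficient of `f` at `S`, normalized by the uniform probability measure. -/
noncomputable def walshCoeff (f : (ι → ZMod 2) → ℝ) (S : Finset ι) : ℝ :=
  𝔼 x, f x * walsh S x

lemma sum_walshCoeff_mul_walsh (f : (ι → ZMod 2) → ℝ) (x : ι → ZMod 2) :
    ∑ S, walshCoeff f S * walsh S x = f x := by
  calc ∑ S, walshCoeff f S * walsh S x
      = 𝔼 y, f y * ∑ S, walsh S y * walsh S x := by
        simp only [walshCoeff, expect_mul, mul_sum, ← expect_sum_comm, mul_assoc]
    _ = f x := by
        simp [sum_walsh_mul_walsh, NNRat.smul_def, mul_comm (f x)]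

lemma expect_mul_sum_walsh (f : (ι → ZMod 2) → ℝ) (c : Finset ι → ℝ) :
    𝔼 x, f x * ∑ S, c S * walsh S x = ∑ S, c S * walshCoeff f S := by
  simp only [walshCoeff, mul_sum, mul_expect, expect_sum_comm, mul_left_comm]

lemma sum_walshCoeff_sq (f : (ι → ZMod 2) → ℝ) : ∑ S, walshCoeff f S ^ 2 = 𝔼 x, f x ^ 2 := by
  have h := expect_mul_sum_walsh f (walshCoeff f)
  simp only [sum_walshCoeff_mul_walsh] at h
  simpa only [sq] using h.symm

lemma expect_translate_mul (f g : (ι → ZMod 2) → ℝ) (x : ι → ZMod 2) :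
    𝔼 y, f (x + y) * g y = ∑ S, walshCoeff f S * walshCoeff g S * walsh S x := by
  have h := expect_mul_sum_walsh g fun S => walshCoeff f S * walsh S x
  simp only [mul_assoc, ← walsh_add, sum_walshCoeff_mul_walsh] at h
  simpa only [mul_comm, mul_left_comm] using h

lemma walshCoeff_mul_walsh_univ (f : (ι → ZMod 2) → ℝ) (S : Finset ι) :
    walshCoeff (fun x => f x * walsh univ x) S = walshCoeff f Sᶜ := by
  simp only [walshCoeff, mul_assoc, walsh_univ_mul_walsh]

end Walsh

section Bonami

variable {ι : Type*} [Fintype ι] [DecidableEq ι]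

lemma expect_signChar_mul_eq_zero {i : ι} {f : (ι → ZMod 2) → ℝ}
    (hf : Function.Periodic f (Pi.single i 1)) : 𝔼 x, signChar (x i) * f x = 0 := by
  have hflip : 𝔼 x, signChar (x i) * f x = 𝔼 x, -(signChar (x i) * f x) := by
    refine Fintype.expect_equiv (Equiv.addRight (Pi.single i 1)) _ _ fun x => ?_
    simp only [Equiv.coe_addRight, hf x, Pi.add_apply, Pi.single_eq_same,
      AddChar.map_add_eq_mul, signChar_one]
    ring
  rw [expect_neg_distrib] at hflip
  linarith

lemma expect_add_signChar_mul_pow_four {i : ι} {a b : (ι → ZMod 2) → ℝ}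
    (ha : Function.Periodic a (Pi.single i 1)) (hb : Function.Periodic b (Pi.single i 1)) :
    𝔼 x, (a x + signChar (x i) * b x) ^ 4
      = 𝔼 x, a x ^ 4 + 6 * 𝔼 x, a x ^ 2 * b x ^ 2 + 𝔼 x, b x ^ 4 := by
  have hodd := expect_signChar_mul_eq_zero (i := i)
    (f := fun x => 4 * a x ^ 3 * b x + 4 * a x * b x ^ 3) fun x => by simp only [ha x, hb x]
  rw [← add_zero (_ + 𝔼 x, b x ^ 4), ← hodd, mul_expect, ← expect_add_distrib,
    ← expect_add_distrib, ← expect_add_distrib]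
  refine expect_congr rfl fun x _ => ?_
  have hsq := signChar_mul_self (x i)
  linear_combination (6 * a x ^ 2 * b x ^ 2 + 4 * signChar (x i) * a x * b x ^ 3
    + (signChar (x i) * signChar (x i) + 1) * b x ^ 4) * hsq

lemma expect_add_signChar_mul_pow_four_le {i : ι} {a b : (ι → ZMod 2) → ℝ}
    (ha : Function.Periodic a (Pi.single i 1)) (hb : Function.Periodic b (Pi.single i 1))
    {A B : ℝ} (hA : 0 ≤ A) (hB : 0 ≤ B) (haA : 𝔼 x, a x ^ 4 ≤ A ^ 2) (hbB : 𝔼 x, b x ^ 4 ≤ B ^ 2) :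
    𝔼 x, (a x + signChar (x i) * b x) ^ 4 ≤ (A + 3 * B) ^ 2 := by
  have hmixed : 𝔼 x, a x ^ 2 * b x ^ 2 ≤ A * B := by
    refine le_of_sq_le_sq ?_ (mul_nonneg hA hB)
    calc (𝔼 x, a x ^ 2 * b x ^ 2) ^ 2
        ≤ (𝔼 x, (a x ^ 2) ^ 2) * 𝔼 x, (b x ^ 2) ^ 2 := expect_mul_sq_le_sq_mul_sq ..
      _ = (𝔼 x, a x ^ 4) * 𝔼 x, b x ^ 4 := by simp only [← pow_mul]
      _ ≤ A ^ 2 * B ^ 2 :=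
        mul_le_mul haA hbB (expect_nonneg fun x _ => by positivity) (sq_nonneg A)
      _ = (A * B) ^ 2 := (mul_pow A B 2).symm
  rw [expect_add_signChar_mul_pow_four ha hb]
  nlinarith [sq_nonneg B]

theorem bonami_pow_four (U : Finset ι) (c : Finset ι → ℝ) :
    𝔼 x, (∑ S ∈ U.powerset, c S * walsh S x) ^ 4
      ≤ (∑ S ∈ U.powerset, 3 ^ #S * c S ^ 2) ^ 2 := by
  induction U using Finset.induction_on generalizing c with
  | empty => simp [walsh, ← pow_mul]
  | insert i U hi ih =>
    have hnot : ∀ S ∈ U.powerset, i ∉ S := fun S hS h => hi (mem_powerset.mp hS h)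
    have hperiodic (c : Finset ι → ℝ) :
        Function.Periodic (fun x => ∑ S ∈ U.powerset, c S * walsh S x) (Pi.single i 1) :=
      fun x => sum_congr rfl fun S hS => by rw [walsh_periodic_single (hnot S hS) x]
    have hnonneg (c : Finset ι → ℝ) : 0 ≤ ∑ S ∈ U.powerset, (3 : ℝ) ^ #S * c S ^ 2 :=
      sum_nonneg fun S _ => by positivity
    have hsplit (x : ι → ZMod 2) : ∑ S ∈ (insert i U).powerset, c S * walsh S x
        = ∑ S ∈ U.powerset, c S * walsh S x
          + signChar (x i) * ∑ S ∈ U.powerset, c (insert i S) * walsh S x := by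
      rw [sum_powerset_insert hi, mul_sum]
      congr 1
      refine sum_congr rfl fun S hS => ?_
      rw [walsh_insert (hnot S hS), mul_left_comm]
    have hweight : ∑ S ∈ (insert i U).powerset, (3 : ℝ) ^ #S * c S ^ 2
        = ∑ S ∈ U.powerset, (3 : ℝ) ^ #S * c S ^ 2
          + 3 * ∑ S ∈ U.powerset, (3 : ℝ) ^ #S * c (insert i S) ^ 2 := by
      rw [sum_powerset_insert hi, mul_sum]
      congr 1
      refine sum_congr rfl fun S hS => ?_
      rw [card_insert_of_notMem (hnot S hS), pow_succ', mul_assoc]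
    simp only [hsplit, hweight]
    exact expect_add_signChar_mul_pow_four_le (hperiodic c) (hperiodic fun S => c (insert i S))
      (hnonneg c) (hnonneg fun S => c (insert i S)) (ih c) (ih fun S => c (insert i S))

end Bonami

section NoiseStability

lemma expect_mul_pow_four_le {α : Type*} (s : Finset α) (f g : α → ℝ) :
    (𝔼 x ∈ s, f x * g x) ^ 4
      ≤ (𝔼 x ∈ s, |f x|) ^ 2 * (𝔼 x ∈ s, f x ^ 2) * 𝔼 x ∈ s, g x ^ 4 := by
  have hfg : (𝔼 x ∈ s, f x * g x) ^ 2 ≤ (𝔼 x ∈ s, |f x|) * 𝔼 x ∈ s, |f x| * g x ^ 2 := by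
    calc (𝔼 x ∈ s, f x * g x) ^ 2
        ≤ (𝔼 x ∈ s, √|f x| * (√|f x| * |g x|)) ^ 2 := by
          simp only [← mul_assoc, Real.mul_self_sqrt (abs_nonneg _), ← abs_mul]
          exact sq_le_sq' (abs_le.mp (abs_expect_le s _)).1 (abs_le.mp (abs_expect_le s _)).2
      _ ≤ (𝔼 x ∈ s, √|f x| ^ 2) * 𝔼 x ∈ s, (√|f x| * |g x|) ^ 2 := expect_mul_sq_le_sq_mul_sq ..
      _ = (𝔼 x ∈ s, |f x|) * 𝔼 x ∈ s, |f x| * g x ^ 2 := by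
          simp only [mul_pow, Real.sq_sqrt (abs_nonneg _), sq_abs]
  have hfgg : (𝔼 x ∈ s, |f x| * g x ^ 2) ^ 2 ≤ (𝔼 x ∈ s, f x ^ 2) * 𝔼 x ∈ s, (g x ^ 2) ^ 2 := by
    simpa only [sq_abs] using
      expect_mul_sq_le_sq_mul_sq s (fun x => |f x|) fun x => g x ^ 2
  calc (𝔼 x ∈ s, f x * g x) ^ 4
      = ((𝔼 x ∈ s, f x * g x) ^ 2) ^ 2 := by rw [← pow_mul]
    _ ≤ ((𝔼 x ∈ s, |f x|) * 𝔼 x ∈ s, |f x| * g x ^ 2) ^ 2 := by gcongr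
    _ = (𝔼 x ∈ s, |f x|) ^ 2 * (𝔼 x ∈ s, |f x| * g x ^ 2) ^ 2 := mul_pow ..
    _ ≤ (𝔼 x ∈ s, |f x|) ^ 2 * ((𝔼 x ∈ s, f x ^ 2) * 𝔼 x ∈ s, (g x ^ 2) ^ 2) := by gcongr
    _ = (𝔼 x ∈ s, |f x|) ^ 2 * (𝔼 x ∈ s, f x ^ 2) * 𝔼 x ∈ s, g x ^ 4 := by
      simp only [← pow_mul, mul_assoc]

variable {ι : Type*} [Fintype ι] [DecidableEq ι]

/-- The noise stability `(f, T_ρ f)` of `f`, where `T_ρ` is the noise operator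
`walsh S ↦ ρ ^ #S * walsh S`. -/
noncomputable def noiseStability (ρ : ℝ) (f : (ι → ZMod 2) → ℝ) : ℝ :=
  ∑ S, ρ ^ #S * walshCoeff f S ^ 2

lemma noiseStability_nonneg {ρ : ℝ} (hρ : 0 ≤ ρ) (f : (ι → ZMod 2) → ℝ) :
    0 ≤ noiseStability ρ f :=
  sum_nonneg fun S _ => by positivity

lemma noiseStability_mul_walsh_univ (ρ : ℝ) (f : (ι → ZMod 2) → ℝ) :
    noiseStability ρ (fun x => f x * walsh univ x) = ∑ S, ρ ^ #Sᶜ * walshCoeff f S ^ 2 := by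
  simp only [noiseStability, walshCoeff_mul_walsh_univ]
  exact Fintype.sum_bijective compl compl_involutive.bijective _ _ fun S => by rw [compl_compl]

theorem noiseStability_one_third_le (f : (ι → ZMod 2) → ℝ) :
    noiseStability (1 / 3) f ≤ (𝔼 x, |f x|) * √(𝔼 x, f x ^ 2) := by
  let c (S : Finset ι) : ℝ := (1 / 3) ^ #S * walshCoeff f S
  have hF : 0 ≤ 𝔼 x, f x ^ 2 := expect_nonneg fun x _ => sq_nonneg _
  have hpair : 𝔼 x, f x * ∑ S, c S * walsh S x = noiseStability (1 / 3) f := by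
    rw [expect_mul_sum_walsh]
    exact sum_congr rfl fun S _ => by ring
  have hfourth : 𝔼 x, (∑ S, c S * walsh S x) ^ 4 ≤ noiseStability (1 / 3) f ^ 2 := by
    have hcancel (S : Finset ι) : 3 ^ #S * c S ^ 2 = (1 / 3) ^ #S * walshCoeff f S ^ 2 := by
      have h3 : (3 : ℝ) ^ #S * (1 / 3) ^ #S = 1 := by rw [← mul_pow]; norm_num
      linear_combination (1 / 3) ^ #S * walshCoeff f S ^ 2 * h3
    simpa only [powerset_univ, hcancel, noiseStability] using bonami_pow_four univ c
  set Q := noiseStability (1 / 3) f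
  obtain hQ | hQ := (show 0 ≤ Q from noiseStability_nonneg (by norm_num) f).eq_or_lt
  · rw [← hQ]
    positivity
  have hsq : Q ^ 2 ≤ ((𝔼 x, |f x|) * √(𝔼 x, f x ^ 2)) ^ 2 := by
    rw [mul_pow, Real.sq_sqrt hF]
    refine le_of_mul_le_mul_right ?_ (sq_pos_of_pos hQ)
    calc Q ^ 2 * Q ^ 2 = (𝔼 x, f x * ∑ S, c S * walsh S x) ^ 4 := by rw [hpair, ← pow_add]
      _ ≤ _ := expect_mul_pow_four_le ..
      _ ≤ (𝔼 x, |f x|) ^ 2 * (𝔼 x, f x ^ 2) * Q ^ 2 := by gcongr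
  exact le_of_sq_le_sq hsq (by positivity)

lemma noiseStability_rpow_le {ρ θ : ℝ} (hρ : 0 ≤ ρ) (hθ0 : 0 < θ) (hθ1 : θ ≤ 1)
    (f : (ι → ZMod 2) → ℝ) :
    noiseStability (ρ ^ θ) f ≤ (𝔼 x, f x ^ 2) ^ (1 - θ) * noiseStability ρ f ^ θ := by
  have hHolder := Real.inner_le_weight_mul_Lp_of_nonneg univ (one_le_inv_iff₀.mpr ⟨hθ0, hθ1⟩)
    (fun S => walshCoeff f S ^ 2) (fun S => (ρ ^ #S) ^ θ)
    (fun S => sq_nonneg _) fun S => by positivity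
  simp only [Real.rpow_rpow_inv (pow_nonneg hρ _) hθ0.ne', inv_inv, sum_walshCoeff_sq] at hHolder
  simpa only [noiseStability, Real.rpow_pow_comm hρ, mul_comm] using hHolder

lemma noiseStability_one_third_rpow_le {θ : ℝ} (hθ0 : 0 < θ) (hθ1 : θ ≤ 1)
    (f : (ι → ZMod 2) → ℝ) :
    noiseStability ((1 / 3) ^ θ) f ≤ (𝔼 x, |f x|) ^ θ * √(𝔼 x, f x ^ 2) ^ (2 - θ) := by
  have hL : 0 ≤ 𝔼 x, |f x| := expect_nonneg fun x _ => abs_nonneg _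
  have hF : 0 ≤ 𝔼 x, f x ^ 2 := expect_nonneg fun x _ => sq_nonneg _
  calc noiseStability ((1 / 3) ^ θ) f
      ≤ (𝔼 x, f x ^ 2) ^ (1 - θ) * noiseStability (1 / 3) f ^ θ :=
        noiseStability_rpow_le (by norm_num) hθ0 hθ1 f
    _ ≤ (𝔼 x, f x ^ 2) ^ (1 - θ) * ((𝔼 x, |f x|) * √(𝔼 x, f x ^ 2)) ^ θ := by
        gcongr
        · exact noiseStability_nonneg (by norm_num) f
        · exact noiseStability_one_third_le f
    _ = (√(𝔼 x, f x ^ 2) ^ 2) ^ (1 - θ) * ((𝔼 x, |f x|) * √(𝔼 x, f x ^ 2)) ^ θ := by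
        rw [Real.sq_sqrt hF]
    _ = (𝔼 x, |f x|) ^ θ * √(𝔼 x, f x ^ 2) ^ (2 - θ) := by
        have hexp : 2 - θ = 2 * (1 - θ) + θ := by ring
        rw [Real.mul_rpow hL (Real.sqrt_nonneg _), hexp,
          Real.rpow_add_of_nonneg (Real.sqrt_nonneg _) (by linarith) hθ0.le,
          Real.rpow_mul (Real.sqrt_nonneg _), Real.rpow_two, mul_left_comm]

end NoiseStability

section Krawtchouk

open Polynomial

/-- Coefficientwise domination of polynomials: the coefficients of `q` bound those of `p` in
absolute value. -/
def CoeffAbsLE {R : Type*} [Ring R] [LinearOrder R] (p q : R[X]) : Prop :=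
  ∀ k, |p.coeff k| ≤ q.coeff k

namespace CoeffAbsLE

variable {R : Type*} [Ring R] [LinearOrder R] [IsOrderedRing R] {p q p' q' : R[X]}

lemma mul (h : CoeffAbsLE p q) (h' : CoeffAbsLE p' q') : CoeffAbsLE (p * p') (q * q') := by
  intro k
  rw [coeff_mul, coeff_mul]
  refine (abs_sum_le_sum_abs _ _).trans (sum_le_sum fun i _ => ?_)
  rw [abs_mul]
  exact mul_le_mul (h _) (h' _) (abs_nonneg _) ((abs_nonneg _).trans (h _))

lemma pow (h : CoeffAbsLE p q) (m : ℕ) : CoeffAbsLE (p ^ m) (q ^ m) := by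
  induction m with
  | zero =>
    intro k
    simp only [pow_zero, coeff_one]
    split_ifs <;> simp
  | succ m ih => simpa only [pow_succ] using ih.mul h

lemma one_sub_X_pow (m : ℕ) : CoeffAbsLE (1 - X ^ m : R[X]) (1 + X ^ m) := by
  intro k
  simp only [coeff_sub, coeff_add, coeff_one, coeff_X_pow]
  split_ifs <;> simp

lemma one_add_X : CoeffAbsLE (1 + X : R[X]) (1 + X) := by
  intro k
  simp only [coeff_add, coeff_one, coeff_X]
  exact (abs_of_nonneg (by split_ifs <;> simp)).le

end CoeffAbsLE

/-- The value at `s` of the Krawtchouk polynomial of degree `j`, for `s ≤ n`, given by its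
generating function. -/
noncomputable def krawtchouk (n j s : ℕ) : ℝ :=
  ((1 - X) ^ s * (1 + X) ^ (n - s) : ℝ[X]).coeff j

lemma sum_walsh_mul_X_pow_hammingNorm {ι : Type*} [Fintype ι] [DecidableEq ι] (S : Finset ι) :
    ∑ x : ι → ZMod 2, C (walsh S x) * X ^ hammingNorm x
      = ((1 - X) ^ #S * (1 + X) ^ (Fintype.card ι - #S) : ℝ[X]) := by
  let term (i : ι) (a : ZMod 2) : ℝ[X] :=
    (if i ∈ S then C (signChar a) else 1) * (if a = 0 then 1 else X)
  have hterm (x : ι → ZMod 2) : C (walsh S x) * X ^ hammingNorm x = ∏ i, term i (x i) := by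
    simp only [term, prod_mul_distrib, walsh, map_prod, hammingNorm]
    rw [prod_ite_mem, univ_inter, prod_ite, prod_const_one, one_mul, prod_const]
  have hsum (i : ι) : ∑ a, term i a = if i ∈ S then 1 - X else 1 + X := by
    have huniv : (univ : Finset (ZMod 2)) = {0, 1} := by decide
    rw [huniv, sum_pair zero_ne_one]
    split_ifs with hi <;> simp [term, hi, signChar_one, sub_eq_add_neg]
  simp only [hterm, ← Fintype.prod_sum, hsum]
  simp [prod_ite, filter_not, ← compl_eq_univ_sdiff, card_compl]

lemma sum_walsh_mul_sphereInd {n : ℕ} (S : Finset (Fin n)) (j : ℕ) :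
    ∑ x, walsh S x * sphereInd n j x = krawtchouk n j #S := by
  have hgen := sum_walsh_mul_X_pow_hammingNorm S
  rw [Fintype.card_fin] at hgen
  rw [krawtchouk, ← hgen, finsetSum_coeff]
  simp only [coeff_C_mul, coeff_X_pow, sphereInd, eq_comm]

lemma choose_add_two_mul {N j : ℕ} (hj : j ≤ N) :
    ((N + 2).choose (j + 2) : ℝ) * ((j + 2) * (N - j))
      = N.choose (j + 1) * ((N + 2) * (N + 1)) := by
  have hupper : ((N + 2 : ℝ)) * (N + 1).choose (j + 1) = (N + 2).choose (j + 2) * (j + 2) := by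
    exact_mod_cast Nat.add_one_mul_choose_eq (N + 1) (j + 1)
  have hlower : (N.choose (j + 1) : ℝ) * (N + 1) = (N + 1).choose (j + 1) * (N - j) := by
    have h := Nat.choose_mul_succ_eq N (j + 1)
    rw [Nat.add_sub_add_right] at h
    rw [← Nat.cast_sub hj]
    exact_mod_cast h
  linear_combination (j - N : ℝ) * hupper - (N + 2 : ℝ) * hlower

lemma choose_add_choose_le {N j : ℕ} {δ : ℝ} (hδ : 0 ≤ δ) (hlow : δ * (N + 2) ≤ j + 2)
    (hhigh : δ * (N + 2) ≤ N - j) :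
    (N.choose (j + 2) + N.choose j : ℝ) ≤ (1 - 2 * δ ^ 2) * (N + 2).choose (j + 2) := by
  have hjN : j ≤ N := by
    have : (0 : ℝ) ≤ N - j := le_trans (by positivity) hhigh
    exact_mod_cast sub_nonneg.mp this
  have hpascal : ((N + 2).choose (j + 2) : ℝ)
      = N.choose j + 2 * N.choose (j + 1) + N.choose (j + 2) := by
    rw [Nat.choose_succ_succ' (N + 1) (j + 1), Nat.choose_succ_succ' N j,
      Nat.choose_succ_succ' N (j + 1)]
    push_cast
    ring
  have hmiddle : δ ^ 2 * (N + 2).choose (j + 2) ≤ (N.choose (j + 1) : ℝ) := by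
    refine le_of_mul_le_mul_right ?_ (by positivity : (0 : ℝ) < (N + 2) * (N + 2))
    calc δ ^ 2 * (N + 2).choose (j + 2) * ((N + 2) * (N + 2) : ℝ)
        = (N + 2).choose (j + 2) * ((δ * (N + 2)) * (δ * (N + 2))) := by ring
      _ ≤ (N + 2).choose (j + 2) * ((j + 2) * (N - j)) := by gcongr
      _ = N.choose (j + 1) * ((N + 2) * (N + 1)) := choose_add_two_mul hjN
      _ ≤ N.choose (j + 1) * ((N + 2) * (N + 2)) := by gcongr; norm_num
  linarith

lemma coeff_one_add_X_sq_pow_mul_le {δ : ℝ} (hδ : 0 ≤ δ) (m t j : ℕ)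
    (hlow : 2 * t + δ * (m + 2 * t) ≤ j) (hhigh : 2 * t + δ * (m + 2 * t) ≤ m + 2 * t - j) :
    ((1 + X ^ 2) ^ t * (1 + X) ^ m : ℝ[X]).coeff j
      ≤ (1 - 2 * δ ^ 2) ^ t * (m + 2 * t).choose j := by
  induction t generalizing j with
  | zero => simp [coeff_one_add_X_pow]
  | succ t ih =>
    push_cast at hlow hhigh
    have hδN : 0 ≤ δ * (m + 2 * t) := by positivity
    obtain ⟨j, rfl⟩ := Nat.exists_eq_add_of_le' (show 2 ≤ j by
      have : (2 : ℝ) ≤ j := by linarith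
      exact_mod_cast this)
    push_cast at hlow hhigh
    have hbase : 0 ≤ 1 - 2 * δ ^ 2 := by
      have hδ_half : δ ≤ 1 / 2 := by
        refine le_of_mul_le_mul_right ?_ (by positivity : (0 : ℝ) < m + 2 * t + 2)
        linarith
      nlinarith
    have hrec : ((1 + X ^ 2) ^ (t + 1) * (1 + X) ^ m : ℝ[X])
        = (1 + X ^ 2) ^ t * (1 + X) ^ m + (1 + X ^ 2) ^ t * (1 + X) ^ m * X ^ 2 := by ring
    rw [hrec, coeff_add, coeff_mul_X_pow]
    calc ((1 + X ^ 2) ^ t * (1 + X) ^ m : ℝ[X]).coeff (j + 2)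
          + ((1 + X ^ 2) ^ t * (1 + X) ^ m : ℝ[X]).coeff j
        ≤ (1 - 2 * δ ^ 2) ^ t * (m + 2 * t).choose (j + 2)
          + (1 - 2 * δ ^ 2) ^ t * (m + 2 * t).choose j := by
          gcongr
          · exact ih (j + 2) (by push_cast; linarith) (by push_cast; linarith)
          · exact ih j (by linarith) (by linarith)
      _ = (1 - 2 * δ ^ 2) ^ t * ((m + 2 * t).choose (j + 2) + (m + 2 * t).choose j) :=
          (mul_add ..).symm
      _ ≤ (1 - 2 * δ ^ 2) ^ t * ((1 - 2 * δ ^ 2) * (m + 2 * t + 2).choose (j + 2)) := by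
          gcongr
          exact choose_add_choose_le hδ (by push_cast; linarith) (by push_cast; linarith)
      _ = (1 - 2 * δ ^ 2) ^ (t + 1) * (m + 2 * (t + 1)).choose (j + 2) := by
          rw [← mul_assoc, ← pow_succ, mul_add_one, add_assoc]

lemma abs_krawtchouk_le_pow {n j s t : ℕ} {δ : ℝ} (hδ : 0 ≤ δ) (hts : t ≤ s) (htn : t + s ≤ n)
    (hlow : 2 * t + δ * n ≤ j) (hhigh : 2 * t + δ * n ≤ n - j) :
    |krawtchouk n j s| ≤ (1 - 2 * δ ^ 2) ^ t * n.choose j := by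
  obtain ⟨u, rfl⟩ := Nat.exists_eq_add_of_le hts
  obtain ⟨v, rfl⟩ := Nat.exists_eq_add_of_le htn
  have hfactor : ((1 - X) ^ (t + u) * (1 + X) ^ (t + v) : ℝ[X])
      = (1 - X ^ 2) ^ t * ((1 - X ^ 1) ^ u * (1 + X) ^ v) := by
    have hsq : (1 - X ^ 2 : ℝ[X]) = (1 - X) * (1 + X) := by ring
    rw [hsq, mul_pow, pow_add, pow_add]
    ring
  have hdom := ((CoeffAbsLE.one_sub_X_pow (R := ℝ) 2).pow t).mul
    (((CoeffAbsLE.one_sub_X_pow 1).pow u).mul (CoeffAbsLE.one_add_X.pow v))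
  have hcard : t + (t + u) + v = u + v + 2 * t := by ring
  have hbound := coeff_one_add_X_sq_pow_mul_le hδ (u + v) t j
    (by push_cast at hlow ⊢; linarith) (by push_cast at hhigh ⊢; linarith)
  rw [krawtchouk, show t + (t + u) + v - (t + u) = t + v by omega, hfactor, hcard]
  refine (hdom j).trans ?_
  rwa [pow_one, ← pow_add]

lemma one_sub_sq_div_two_pow_floor_le {ε : ℝ} (hε0 : 0 ≤ ε) (hε1 : ε ≤ 1 / 2) (s : ℕ) :
    (1 - ε ^ 2 / 2) ^ ⌊ε * s / 2⌋₊ ≤ 2 * ((1 / 3) ^ (ε ^ 3 / 8)) ^ s := by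
  set t := ⌊ε * s / 2⌋₊
  have hfloor : ε * s / 2 < t + 1 := Nat.lt_floor_add_one _
  have hlog3 : Real.log 3 ≤ 2 := by
    linarith [Real.log_le_sub_one_of_pos (show (0 : ℝ) < 3 by norm_num)]
  have hexponent : t * -(ε ^ 2 / 2) ≤ Real.log 2 + -Real.log 3 * (ε ^ 3 / 8) * s := by
    have hloss : ε * s / 2 * (ε ^ 2 / 2) ≤ (t + 1) * (ε ^ 2 / 2) := by gcongr
    have hgain : Real.log 3 * (ε ^ 3 / 8 * s) ≤ 2 * (ε ^ 3 / 8 * s) := by gcongr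
    have hε2 : ε ^ 2 ≤ 1 / 4 := by nlinarith
    linarith [Real.log_two_gt_d9]
  calc (1 - ε ^ 2 / 2) ^ t
      ≤ Real.exp (-(ε ^ 2 / 2)) ^ t := by
        have hbase : 0 ≤ 1 - ε ^ 2 / 2 := by nlinarith
        gcongr
        exact Real.one_sub_le_exp_neg _
    _ = Real.exp (t * -(ε ^ 2 / 2)) := (Real.exp_nat_mul ..).symm
    _ ≤ Real.exp (Real.log 2 + -Real.log 3 * (ε ^ 3 / 8) * s) := Real.exp_le_exp.mpr hexponent
    _ = 2 * ((1 / 3) ^ (ε ^ 3 / 8)) ^ s := by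
        rw [Real.exp_add, Real.exp_log two_pos, mul_comm _ (s : ℝ), Real.exp_nat_mul,
          Real.rpow_def_of_pos (by norm_num), one_div, Real.log_inv]

theorem abs_krawtchouk_le {n j s : ℕ} {ε : ℝ} (hε0 : 0 ≤ ε) (hε1 : ε ≤ 1 / 2)
    (hlow : ε * n ≤ j) (hhigh : j ≤ (1 - ε) * n) (hs : s ≤ n) :
    |krawtchouk n j s| ≤
      2 * (((1 / 3) ^ (ε ^ 3 / 8)) ^ s + ((1 / 3) ^ (ε ^ 3 / 8)) ^ (n - s)) * n.choose j := by
  set r := min s (n - s) with hr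
  have hrn : 2 * (r : ℝ) ≤ n := by exact_mod_cast (by omega : 2 * r ≤ n)
  set t := ⌊ε * r / 2⌋₊
  have htr : (t : ℝ) ≤ ε * r / 2 := Nat.floor_le (by positivity)
  have htr' : t ≤ r := by
    have : (t : ℝ) ≤ r := by nlinarith [(Nat.cast_nonneg r : (0 : ℝ) ≤ r)]
    exact_mod_cast this
  have htn : 2 * (t : ℝ) ≤ ε / 2 * n := by nlinarith
  calc |krawtchouk n j s|
      ≤ (1 - 2 * (ε / 2) ^ 2) ^ t * n.choose j :=
        abs_krawtchouk_le_pow (by positivity) (by omega) (by omega) (by linarith) (by linarith)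
    _ = (1 - ε ^ 2 / 2) ^ t * n.choose j := by ring
    _ ≤ 2 * ((1 / 3) ^ (ε ^ 3 / 8)) ^ r * n.choose j := by
        gcongr
        exact one_sub_sq_div_two_pow_floor_le hε0 hε1 r
    _ ≤ _ := by
        gcongr
        obtain h | h := min_choice s (n - s) <;> rw [hr, h]
        · exact le_add_of_nonneg_right (by positivity)
        · exact le_add_of_nonneg_left (by positivity)

end Krawtchouk

section HammingSphere

variable {n : ℕ}

lemma pnormR_one (f : (Fin n → ZMod 2) → ℝ) : pnormR n 1 f = 𝔼 x, |f x| := by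
  simp [pnormR, Fintype.expect_eq_sum_div_card, Real.rpow_neg, div_eq_inv_mul]

lemma pnormR_two (f : (Fin n → ZMod 2) → ℝ) : pnormR n 2 f = √(𝔼 x, f x ^ 2) := by
  simp [pnormR, Fintype.expect_eq_sum_div_card, Real.rpow_neg, div_eq_inv_mul,
    Real.sqrt_eq_rpow]

lemma pnormR_one_pos {f : (Fin n → ZMod 2) → ℝ} (hf : f ≠ 0) : 0 < pnormR n 1 f := by
  obtain ⟨x, hx⟩ := Function.ne_iff.mp hf
  rw [pnormR_one]
  exact expect_pos' (fun _ _ => abs_nonneg _) ⟨x, mem_univ x, abs_pos.mpr hx⟩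

lemma pnormR_two_pos {f : (Fin n → ZMod 2) → ℝ} (hf : f ≠ 0) : 0 < pnormR n 2 f := by
  obtain ⟨x, hx⟩ := Function.ne_iff.mp hf
  rw [pnormR_two, Real.sqrt_pos]
  exact expect_pos' (fun _ _ => sq_nonneg _) ⟨x, mem_univ x, sq_pos_of_ne_zero hx⟩

lemma innerP_conv (f g h : (Fin n → ZMod 2) → ℝ) :
    innerP n (conv n f g) h
      = ∑ S, walshCoeff f S * walshCoeff g S * ∑ x, walsh S x * h x := by
  calc innerP n (conv n f g) h = ∑ x, (𝔼 y, f (x + y) * g y) * h x := by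
        simp only [innerP, conv, mul_sum, ← mul_assoc, Fintype.expect_eq_sum_div_card,
          Fintype.card_pi_const, ZMod.card, div_eq_inv_mul, Nat.cast_pow, Nat.cast_ofNat]
    _ = _ := by
        simp only [expect_translate_mul, sum_mul, mul_sum, mul_assoc]
        exact sum_comm

lemma noiseStability_le_pnormR {θ : ℝ} (hθ0 : 0 < θ) (hθ1 : θ ≤ 1) (f : (Fin n → ZMod 2) → ℝ) :
    noiseStability ((1 / 3) ^ θ) f ≤ pnormR n 1 f ^ θ * pnormR n 2 f ^ (2 - θ) := by
  rw [pnormR_one, pnormR_two]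
  exact noiseStability_one_third_rpow_le hθ0 hθ1 f

lemma pnormR_mul_walsh (p : ℝ) (f : (Fin n → ZMod 2) → ℝ) (S : Finset (Fin n)) :
    pnormR n p (fun x => f x * walsh S x) = pnormR n p f := by
  simp only [pnormR, abs_mul, abs_walsh, mul_one]

theorem abs_innerP_conv_sphereInd_le {j : ℕ} {ε : ℝ} (hε0 : 0 < ε) (hε1 : ε ≤ 1 / 2)
    (hlow : ε * n ≤ j) (hhigh : j ≤ (1 - ε) * n) (f : (Fin n → ZMod 2) → ℝ) :
    |innerP n (conv n f f) (sphereInd n j)| ≤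
      4 * (pnormR n 1 f ^ (ε ^ 3 / 8) * pnormR n 2 f ^ (2 - ε ^ 3 / 8)) * n.choose j := by
  have hθ0 : 0 < ε ^ 3 / 8 := by positivity
  have hθ1 : ε ^ 3 / 8 ≤ 1 := by
    linarith [pow_le_one₀ (n := 3) hε0.le (show ε ≤ 1 by linarith)]
  set θ := ε ^ 3 / 8
  set ρ : ℝ := (1 / 3) ^ θ
  let f' (x : Fin n → ZMod 2) : ℝ := f x * walsh univ x
  calc |innerP n (conv n f f) (sphereInd n j)|
      = |∑ S, walshCoeff f S ^ 2 * krawtchouk n j #S| := by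
        simp only [innerP_conv, sum_walsh_mul_sphereInd, ← sq]
    _ ≤ ∑ S, walshCoeff f S ^ 2 * |krawtchouk n j #S| := by
        refine (abs_sum_le_sum_abs _ _).trans_eq (sum_congr rfl fun S _ => ?_)
        rw [abs_mul, abs_sq]
    _ ≤ ∑ S, walshCoeff f S ^ 2 * (2 * (ρ ^ #S + ρ ^ #Sᶜ) * n.choose j) := by
        gcongr with S
        rw [card_compl, Fintype.card_fin]
        exact abs_krawtchouk_le hε0.le hε1 hlow hhigh (card_finset_fin_le S)
    _ = 2 * (noiseStability ρ f + noiseStability ρ f') * n.choose j := by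
        rw [noiseStability_mul_walsh_univ, noiseStability, ← sum_add_distrib, mul_sum, sum_mul]
        exact sum_congr rfl fun S _ => by ring
    _ ≤ 2 * (pnormR n 1 f ^ θ * pnormR n 2 f ^ (2 - θ)
          + pnormR n 1 f' ^ θ * pnormR n 2 f' ^ (2 - θ)) * n.choose j := by
        gcongr <;> exact noiseStability_le_pnormR hθ0 hθ1 _
    _ = 4 * (pnormR n 1 f ^ θ * pnormR n 2 f ^ (2 - θ)) * n.choose j := by
        simp only [f', pnormR_mul_walsh]
        ring

end HammingSphere

lemma sq_div_sq_le_of_mul_sq_le {a b c θ lam : ℝ} (ha : 0 < a) (hb : 0 < b) (hθ : 0 < θ)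
    (hlam : 0 < lam) (h : lam * a ^ 2 ≤ c * (b ^ θ * a ^ (2 - θ))) :
    a ^ 2 / b ^ 2 ≤ (c / lam) ^ (2 / θ) := by
  have hratio : (a / b) ^ θ ≤ c / lam := by
    rw [Real.div_rpow ha.le hb.le, div_le_div_iff₀ (by positivity) hlam]
    refine le_of_mul_le_mul_right ?_ (Real.rpow_pos_of_pos ha (2 - θ))
    calc a ^ θ * lam * a ^ (2 - θ) = lam * a ^ 2 := by
          rw [mul_right_comm, ← Real.rpow_add ha, add_sub_cancel, Real.rpow_two, mul_comm]
      _ ≤ c * b ^ θ * a ^ (2 - θ) := by rwa [mul_assoc]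
  calc a ^ 2 / b ^ 2 = ((a / b) ^ θ) ^ (2 / θ) := by
        rw [← Real.rpow_mul (by positivity), mul_div_cancel₀ _ hθ.ne', Real.rpow_two, div_pow]
    _ ≤ (c / lam) ^ (2 / θ) := by gcongr

theorem sumset_sphere_density_bound_general {n j : ℕ} {ε lam : ℝ} (hε0 : 0 < ε) (hε1 : ε ≤ 1 / 2)
    (hlow : ε * n ≤ j) (hhigh : j ≤ (1 - ε) * n) (hlam : 0 < lam)
    {φ : (Fin n → ZMod 2) → ℝ} (hφ : φ ≠ 0)
    (h : lam * pnormR n 2 φ ^ 2 ≤ |innerP n (conv n φ φ) (sphereInd n j)| / n.choose j) :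
    pnormR n 2 φ ^ 2 / pnormR n 1 φ ^ 2 ≤ (4 / lam) ^ (16 / ε ^ 3) := by
  have hexp : 16 / ε ^ 3 = 2 / (ε ^ 3 / 8) := by field_simp; norm_num
  rw [hexp]
  refine sq_div_sq_le_of_mul_sq_le (pnormR_two_pos hφ) (pnormR_one_pos hφ) (by positivity) hlam ?_
  have hpos : 0 ≤ pnormR n 1 φ ^ (ε ^ 3 / 8) * pnormR n 2 φ ^ (2 - ε ^ 3 / 8) :=
    mul_nonneg (Real.rpow_nonneg (pnormR_one_pos hφ).le _)
      (Real.rpow_nonneg (pnormR_two_pos hφ).le _)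
  exact h.trans <| div_le_of_le_mul₀ (Nat.cast_nonneg _) (by positivity)
    (abs_innerP_conv_sphereInd_le hε0 hε1 hlow hhigh φ)

theorem sumset_sphere_density_bound :
    ∀ ε : ℝ, 0 < ε → ε ≤ 1 / 2 →
      ∃ C₁ C₂ : ℝ, 0 < C₁ ∧ 0 < C₂ ∧
        ∀ n : ℕ, 1 ≤ n → ∀ j : ℕ, ε * n ≤ j → (j : ℝ) ≤ (1 - ε) * n →
          ∀ lam : ℝ, 0 < lam →
            ∀ φ : (Fin n → ZMod 2) → ℝ, φ ≠ 0 → (∀ x, 0 ≤ φ x) →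
              lam * (pnormR n 2 φ) ^ 2 ≤
                  innerP n (conv n φ φ) (sphereInd n j) / (n.choose j : ℝ) →
              (pnormR n 2 φ) ^ 2 / (pnormR n 1 φ) ^ 2 ≤ (1 / C₁) * lam ^ (-C₂) := by
  intro ε hε0 hε1
  refine ⟨4 ^ (-(16 / ε ^ 3)), 16 / ε ^ 3, by positivity, by positivity, ?_⟩
  intro n _ j hlow hhigh lam hlam φ hφ _ h
  rw [one_div, ← Real.rpow_neg four_pos.le, neg_neg, Real.rpow_neg hlam.le, ← div_eq_mul_inv,
    ← Real.div_rpow four_pos.le hlam.le]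
  exact sumset_sphere_density_bound_general hε0 hε1 hlow hhigh hlam hφ
    (h.trans (by gcongr; exact le_abs_self _))
end

section
/- For every ε ∈ (0, 1/2] there exist constants C₁, C₂ > 0 such that for every n ≥ 1, every λ > 0, and every nonempty set A ⊆ F₂ⁿ: if there exists an integer j with εn ≤ j ≤ (1−ε)n such that 2ⁿ · (1_A * 1_A, 1_{S_j}) / (|S_j| · |A|) ≥ λ, then |A| ≥ C₁ λ^{C₂} 2ⁿ. In words, if the sumset A+A covers a λ-fraction (counted with multiplicity normalized by |A|) of some Hamming sphere of non-degenerate radius, then A has cardinality a constant multiple of 2ⁿ. -/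
open Finset

/-- Indicator function of a finite set `A ⊆ 𝔽₂ⁿ`. -/
def indSet (n : ℕ) (A : Finset (Fin n → ZMod 2)) : (Fin n → ZMod 2) → ℝ :=
  fun x => if x ∈ A then 1 else 0

/-!
By Cauchy–Schwarz and self-adjointness of convolution, `(f * f, s)² ≤ (f, f) (f, f * (s * s))` for
`f = 1_A` and `s = 1_{S_j}`, so it suffices to control `s * s`, whose value at a point of weight
`2i` is `C(2i, i) C(n - 2i, j - i)`. Write `p = j / n` and `q = 1 - p`. Up to a constant factor,
`s * s` is at most `C(n, j)²` times the noise kernel of rate `2pq` at weights within `ε² n` of the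
mean `2pqn`; at the remaining weights the bound loses a factor of order `n`, coming from Stirling's
formula, which is absorbed by the exponential gain from tilting the rate `2pq` by `e^{± ε²}`. All
three rates stay away from `0` and `1`, so the two-function hypercontractive inequality bounds
`(f, f * K)` by `‖f‖_r²` for each of these kernels `K`, with one exponent `r < 2` depending on `ε`
only. For `f = 1_A` of density `μ` this is `μ^{2/r}`, a gain of the power `μ^{2/r - 1}` over the
trivial bound.
-/

section TwoPointInequality

variable {p θ a b c d y : ℝ}

theorem hasDerivAt_one_add_rpow (h : 1 + y ≠ 0 ∨ 1 ≤ p) :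
    HasDerivAt (fun y : ℝ => (1 + y) ^ p) (p * (1 + y) ^ (p - 1)) y := by
  simpa using ((hasDerivAt_id y).const_add 1).rpow_const h

theorem hasDerivAt_one_sub_rpow (h : 1 - y ≠ 0 ∨ 1 ≤ p) :
    HasDerivAt (fun y : ℝ => (1 - y) ^ p) (-(p * (1 - y) ^ (p - 1))) y := by
  simpa using ((hasDerivAt_id y).const_sub 1).rpow_const h

theorem two_le_one_add_rpow_add_one_sub_rpow (hp : p ≤ 0) (hy0 : 0 ≤ y) (hy1 : y < 1) :
    2 ≤ (1 + y) ^ p + (1 - y) ^ p := by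
  have hadd : 0 < 1 + y := by linarith
  have hsub : 0 < 1 - y := by linarith
  have hprod : 1 ≤ (1 + y) ^ p * (1 - y) ^ p := by
    rw [← Real.mul_rpow hadd.le hsub.le]
    exact Real.one_le_rpow_of_pos_of_le_one_of_nonpos (mul_pos hadd hsub) (by nlinarith) hp
  nlinarith [sq_nonneg ((1 + y) ^ p - (1 - y) ^ p), Real.rpow_pos_of_pos hadd p,
    Real.rpow_pos_of_pos hsub p]

theorem two_mul_mul_le_one_add_rpow_sub_one_sub_rpow (hp0 : 0 ≤ p) (hp1 : p ≤ 1)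
    (hy0 : 0 ≤ y) (hy1 : y < 1) : 2 * p * y ≤ (1 + y) ^ p - (1 - y) ^ p := by
  have hderiv : ∀ x ∈ Set.Ico (0 : ℝ) 1,
      HasDerivAt (fun x : ℝ => (1 + x) ^ p - (1 - x) ^ p - 2 * p * x)
        (p * ((1 + x) ^ (p - 1) + (1 - x) ^ (p - 1) - 2)) x := fun x hx =>
    (((hasDerivAt_one_add_rpow (.inl (by linarith [hx.1]))).sub
      (hasDerivAt_one_sub_rpow (.inl (by linarith [hx.2])))).sub
      ((hasDerivAt_id x).const_mul (2 * p))).congr_deriv (by ring)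
  have hmono := monotoneOn_of_hasDerivWithinAt_nonneg (convex_Ico 0 1)
    (fun x hx => (hderiv x hx).continuousAt.continuousWithinAt)
    (fun x hx => (hderiv x (interior_subset hx)).hasDerivWithinAt)
    (fun x hx => mul_nonneg hp0 (sub_nonneg.2 (two_le_one_add_rpow_add_one_sub_rpow
      (by linarith) (interior_subset hx).1 (interior_subset hx).2)))
  have := hmono ⟨le_rfl, one_pos⟩ ⟨hy0, hy1⟩ hy0
  norm_num at this
  linarith

theorem one_add_mul_sq_le_one_add_rpow_add_one_sub_rpow_div_two (hp1 : 1 ≤ p) (hp2 : p ≤ 2)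
    (hy0 : 0 ≤ y) (hy1 : y ≤ 1) :
    1 + p * (p - 1) / 2 * y ^ 2 ≤ ((1 + y) ^ p + (1 - y) ^ p) / 2 := by
  have hderiv : ∀ x : ℝ, HasDerivAt (fun x : ℝ => (1 + x) ^ p + (1 - x) ^ p - p * (p - 1) * x ^ 2)
      (p * ((1 + x) ^ (p - 1) - (1 - x) ^ (p - 1) - 2 * (p - 1) * x)) x := fun x =>
    (((hasDerivAt_one_add_rpow (.inr hp1)).add (hasDerivAt_one_sub_rpow (.inr hp1))).sub
      ((hasDerivAt_pow 2 x).const_mul (p * (p - 1)))).congr_deriv (by push_cast; ring)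
  have hmono := monotoneOn_of_hasDerivWithinAt_nonneg (convex_Icc (0 : ℝ) 1)
    (fun x _ => (hderiv x).continuousAt.continuousWithinAt)
    (fun x _ => (hderiv x).hasDerivWithinAt)
    (fun x hx => by
      rw [interior_Icc] at hx
      exact mul_nonneg (by linarith) (sub_nonneg.2 (two_mul_mul_le_one_add_rpow_sub_one_sub_rpow
        (by linarith) (by linarith) hx.1.le hx.2)))
  have := hmono ⟨le_rfl, zero_le_one⟩ ⟨hy0, hy1⟩ hy0
  norm_num at this
  linarith

theorem one_add_mul_sq_le_rpow_mean (hp1 : 1 ≤ p) (hp2 : p ≤ 2) (hy0 : 0 ≤ y) (hy1 : y ≤ 1) :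
    1 + (p - 1) * y ^ 2 ≤ (((1 + y) ^ p + (1 - y) ^ p) / 2) ^ (2 / p) := by
  have hnonneg : 0 ≤ (p - 1) * y ^ 2 := mul_nonneg (by linarith) (sq_nonneg y)
  have hbernoulli : (1 + (p - 1) * y ^ 2) ^ (p / 2) ≤ 1 + p / 2 * ((p - 1) * y ^ 2) :=
    rpow_one_add_le_one_add_mul_self (by linarith) (by linarith) (by linarith)
  calc 1 + (p - 1) * y ^ 2 = ((1 + (p - 1) * y ^ 2) ^ (p / 2)) ^ (2 / p) := by
        rw [← Real.rpow_mul (by linarith), div_mul_div_cancel₀ two_ne_zero,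
          div_self (by linarith), Real.rpow_one]
    _ ≤ (((1 + y) ^ p + (1 - y) ^ p) / 2) ^ (2 / p) := by
        refine Real.rpow_le_rpow (by positivity) (hbernoulli.trans ?_) (by positivity)
        linarith [one_add_mul_sq_le_one_add_rpow_add_one_sub_rpow_div_two hp1 hp2 hy0 hy1]

theorem sq_add_mul_sq_le_rpow_mean (hp1 : 1 ≤ p) (hp2 : p ≤ 2) (ha : 0 ≤ a) (hb : 0 ≤ b) :
    ((a + b) / 2) ^ 2 + (p - 1) * ((a - b) / 2) ^ 2 ≤ ((a ^ p + b ^ p) / 2) ^ (2 / p) := by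
  wlog hab : b ≤ a generalizing a b with H
  · have := H hb ha (le_of_not_ge hab)
    rwa [add_comm b, add_comm (b ^ p), ← neg_sub a, neg_div, neg_sq] at this
  obtain rfl | ha := ha.eq_or_lt
  · obtain rfl := le_antisymm hab hb
    rw [add_zero, sub_zero, zero_div, zero_pow two_ne_zero, mul_zero, add_zero]
    positivity
  set m := (a + b) / 2 with hm
  set y := (a - b) / (a + b) with hy
  have hm0 : 0 < m := by positivity
  have hy0 : 0 ≤ y := div_nonneg (by linarith) (by linarith)
  have hy1 : y ≤ 1 := (div_le_one (by linarith)).2 (by linarith)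
  have hsub : (a - b) / 2 = m * y := by rw [hm, hy]; field_simp
  have ha_eq : a = m * (1 + y) := by linarith
  have hb_eq : b = m * (1 - y) := by linarith
  have hmean : (a ^ p + b ^ p) / 2 = m ^ p * (((1 + y) ^ p + (1 - y) ^ p) / 2) := by
    rw [ha_eq, hb_eq, Real.mul_rpow hm0.le (by linarith), Real.mul_rpow hm0.le (by linarith)]
    ring
  have hmean0 : 0 ≤ ((1 + y) ^ p + (1 - y) ^ p) / 2 := by
    have : 0 ≤ 1 - y := by linarith
    positivity
  calc m ^ 2 + (p - 1) * ((a - b) / 2) ^ 2 = m ^ 2 * (1 + (p - 1) * y ^ 2) := by rw [hsub]; ring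
    _ ≤ m ^ 2 * (((1 + y) ^ p + (1 - y) ^ p) / 2) ^ (2 / p) := by
        gcongr; exact one_add_mul_sq_le_rpow_mean hp1 hp2 hy0 hy1
    _ = ((a ^ p + b ^ p) / 2) ^ (2 / p) := by
        rw [hmean, Real.mul_rpow (by positivity) hmean0, ← Real.rpow_mul hm0.le,
          mul_div_cancel₀ _ (by linarith), Real.rpow_two]

theorem two_point_bilinear_le (hp2 : p ≤ 2) (hθ : |1 - 2 * θ| ≤ p - 1)
    (ha : 0 ≤ a) (hb : 0 ≤ b) (hc : 0 ≤ c) (hd : 0 ≤ d) :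
    (1 - θ) * (a * c + b * d) + θ * (a * d + b * c) ≤
      2 * ((a ^ p + b ^ p) / 2) ^ (1 / p) * ((c ^ p + d ^ p) / 2) ^ (1 / p) := by
  have hp1 : 1 ≤ p := by linarith [abs_nonneg (1 - 2 * θ)]
  have hsq : ∀ x : ℝ, 0 ≤ x → x ^ (2 / p) = (x ^ (1 / p)) ^ 2 := fun x hx => by
    rw [← Real.rpow_natCast, ← Real.rpow_mul hx]; congr 1; push_cast; ring
  have hab := sq_add_mul_sq_le_rpow_mean hp1 hp2 ha hb
  have hcd := sq_add_mul_sq_le_rpow_mean hp1 hp2 hc hd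
  rw [hsq _ (by positivity)] at hab hcd
  set X := ((a ^ p + b ^ p) / 2) ^ (1 / p)
  set Y := ((c ^ p + d ^ p) / 2) ^ (1 / p)
  set u := (a + b) / 2 with hu
  set v := (a - b) / 2 with hv
  set u' := (c + d) / 2 with hu'
  set v' := (c - d) / 2 with hv'
  have hp : 0 ≤ p - 1 := by linarith
  have hcross : (1 - 2 * θ) * (v * v') ≤ (p - 1) * (|v| * |v'|) := by
    refine (le_abs_self _).trans ?_
    rw [abs_mul, abs_mul]
    gcongr
  have hcauchy : (u * u' + (p - 1) * (|v| * |v'|)) ^ 2 ≤ (X * Y) ^ 2 := by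
    calc (u * u' + (p - 1) * (|v| * |v'|)) ^ 2
        ≤ (u ^ 2 + (p - 1) * |v| ^ 2) * (u' ^ 2 + (p - 1) * |v'| ^ 2) := by
          nlinarith [mul_nonneg hp (sq_nonneg (u * |v'| - u' * |v|))]
      _ ≤ X ^ 2 * Y ^ 2 := by rw [sq_abs, sq_abs]; gcongr
      _ = (X * Y) ^ 2 := (mul_pow _ _ _).symm
  have hXY : u * u' + (p - 1) * (|v| * |v'|) ≤ X * Y :=
    le_of_sq_le_sq hcauchy (by positivity)
  calc (1 - θ) * (a * c + b * d) + θ * (a * d + b * c)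
      = 2 * (u * u' + (1 - 2 * θ) * (v * v')) := by rw [hu, hv, hu', hv']; ring
    _ ≤ 2 * (X * Y) := by linarith
    _ = 2 * X * Y := by ring

end TwoPointInequality

section KernelBounds

/-- `IsLpKernelBound p q C K` says that the bilinear form with kernel `K` has norm at most `C` on
`ℓᵖ × ℓ^q`, with respect to counting measure. Only nonnegative functions are tested, which loses
nothing for nonnegative kernels. -/
def IsLpKernelBound {α β : Type*} [Fintype α] [Fintype β] (p q C : ℝ) (K : α → β → ℝ) : Prop :=
  ∀ (f : α → ℝ) (g : β → ℝ), 0 ≤ f → 0 ≤ g →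
    ∑ x, ∑ y, f x * g y * K x y ≤ C * (∑ x, f x ^ p) ^ (1 / p) * (∑ y, g y ^ q) ^ (1 / q)

namespace IsLpKernelBound

variable {α β γ δ : Type*} [Fintype α] [Fintype β] [Fintype γ] [Fintype δ] {p q C D : ℝ}

theorem prod {K : α → β → ℝ} {L : γ → δ → ℝ} (hK : IsLpKernelBound p q C K)
    (hL : IsLpKernelBound p q D L) (hp : p ≠ 0) (hq : q ≠ 0) (hK0 : ∀ a b, 0 ≤ K a b)
    (hD : 0 ≤ D) :
    IsLpKernelBound p q (C * D) fun (x : α × γ) (y : β × δ) => K x.1 y.1 * L x.2 y.2 := by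
  intro f g hf hg
  set F : α → ℝ := fun a => (∑ x, f (a, x) ^ p) ^ (1 / p)
  set G : β → ℝ := fun b => (∑ y, g (b, y) ^ q) ^ (1 / q)
  have hsumF : ∀ a, 0 ≤ ∑ x, f (a, x) ^ p := fun a =>
    sum_nonneg fun x _ => Real.rpow_nonneg (hf _) _
  have hsumG : ∀ b, 0 ≤ ∑ y, g (b, y) ^ q := fun b =>
    sum_nonneg fun y _ => Real.rpow_nonneg (hg _) _
  have hF : ∀ a, F a ^ p = ∑ x, f (a, x) ^ p := fun a => by
    rw [← Real.rpow_mul (hsumF a), one_div_mul_cancel hp, Real.rpow_one]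
  have hG : ∀ b, G b ^ q = ∑ y, g (b, y) ^ q := fun b => by
    rw [← Real.rpow_mul (hsumG b), one_div_mul_cancel hq, Real.rpow_one]
  calc ∑ x, ∑ y, f x * g y * (K x.1 y.1 * L x.2 y.2)
      = ∑ a, ∑ b, K a b * ∑ x, ∑ y, f (a, x) * g (b, y) * L x y := by
        simp only [Fintype.sum_prod_type, mul_sum]
        refine sum_congr rfl fun a _ => sum_comm.trans ?_
        exact sum_congr rfl fun b _ => sum_congr rfl fun x _ => sum_congr rfl fun y _ => by ring
    _ ≤ ∑ a, ∑ b, K a b * (D * F a * G b) := by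
        gcongr with a _ b _
        · exact hK0 a b
        · exact hL _ _ (fun x => hf _) (fun y => hg _)
    _ = D * ∑ a, ∑ b, F a * G b * K a b := by
        simp only [mul_sum]
        exact sum_congr rfl fun a _ => sum_congr rfl fun b _ => by ring
    _ ≤ D * (C * (∑ a, F a ^ p) ^ (1 / p) * (∑ b, G b ^ q) ^ (1 / q)) := by
        gcongr
        exact hK F G (fun a => Real.rpow_nonneg (hsumF a) _) (fun b => Real.rpow_nonneg (hsumG b) _)
    _ = C * D * (∑ x, f x ^ p) ^ (1 / p) * (∑ y, g y ^ q) ^ (1 / q) := by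
        simp only [hF, hG, Fintype.sum_prod_type]
        ring

theorem comp_equiv {K : α → β → ℝ} (hK : IsLpKernelBound p q C K) (e : γ ≃ α) (e' : δ ≃ β) :
    IsLpKernelBound p q C fun x y => K (e x) (e' y) := by
  intro f g hf hg
  have := hK (f ∘ e.symm) (g ∘ e'.symm) (fun x => hf _) (fun y => hg _)
  simpa only [← e.sum_comp, ← e'.sum_comp, Function.comp_apply, Equiv.symm_apply_apply] using this

theorem pi {K : α → β → ℝ} (hK : IsLpKernelBound p q C K) (hp : p ≠ 0) (hq : q ≠ 0)
    (hK0 : ∀ a b, 0 ≤ K a b) (hC : 0 ≤ C) (n : ℕ) :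
    IsLpKernelBound p q (C ^ n) fun (x : Fin n → α) (y : Fin n → β) => ∏ i, K (x i) (y i) := by
  induction n with
  | zero =>
    intro f g hf hg
    simp [← Real.rpow_mul (hf _), ← Real.rpow_mul (hg _), hp, hq]
  | succ n ih =>
    simp only [pow_succ', Fin.prod_univ_succ]
    exact (hK.prod ih hp hq hK0 (by positivity)).comp_equiv
      (Fin.consEquiv fun _ => α).symm (Fin.consEquiv fun _ => β).symm

end IsLpKernelBound

end KernelBounds

section Cube

variable {n : ℕ} {f g h : (Fin n → ZMod 2) → ℝ} {p θ : ℝ}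

theorem conv_comm (f g : (Fin n → ZMod 2) → ℝ) : conv n f g = conv n g f := by
  funext x
  rw [conv, conv, ← Equiv.sum_comp (Equiv.addLeft x)]
  simp only [Equiv.coe_addLeft, ← add_assoc, ZModModule.add_self, zero_add, mul_comm]

theorem conv_assoc (f g h : (Fin n → ZMod 2) → ℝ) :
    conv n (conv n f g) h = conv n f (conv n g h) := by
  funext x
  simp only [conv, sum_mul, mul_sum]
  rw [sum_comm (f := fun y z => f (x + y) * (g (y + z) * h z))]
  refine sum_congr rfl fun z _ => ?_
  rw [← Equiv.sum_comp (Equiv.addRight z)]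
  refine sum_congr rfl fun y _ => ?_
  rw [Equiv.coe_addRight, add_assoc x z, add_left_comm z y z, ZModModule.add_self, add_zero,
    mul_assoc]

theorem innerP_conv_left (f g h : (Fin n → ZMod 2) → ℝ) :
    innerP n (conv n f g) h = innerP n f (conv n h g) := by
  simp only [innerP, conv, sum_mul, mul_sum]
  rw [sum_comm, sum_comm (f := fun x y => _ * (f x * (h (x + y) * g y)))]
  refine sum_congr rfl fun y _ => ?_
  rw [← Equiv.sum_comp (Equiv.addRight y)]
  refine sum_congr rfl fun x _ => ?_
  rw [Equiv.coe_addRight, add_assoc, ZModModule.add_self, add_zero]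
  ring

theorem innerP_le_innerP_right (hf : 0 ≤ f) (hgh : g ≤ h) : innerP n f g ≤ innerP n f h := by
  unfold innerP
  gcongr with x
  · exact hf x
  · exact hgh x

theorem innerP_sq_le (f g : (Fin n → ZMod 2) → ℝ) :
    innerP n f g ^ 2 ≤ innerP n f f * innerP n g g := by
  simp only [innerP, mul_pow, ← pow_two]
  rw [mul_mul_mul_comm, ← pow_two]
  gcongr
  exact sum_mul_sq_le_sq_mul_sq univ f g

theorem conv_le_conv_right (hf : 0 ≤ f) (hgh : g ≤ h) : conv n f g ≤ conv n f h := fun x =>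
  sum_le_sum fun y _ => mul_le_mul_of_nonneg_left (hgh y) (hf (x + y))

theorem innerP_conv_self_sq_le (f g : (Fin n → ZMod 2) → ℝ) :
    innerP n (conv n f f) g ^ 2 ≤ innerP n f f * innerP n f (conv n f (conv n g g)) := by
  calc innerP n (conv n f f) g ^ 2 = innerP n f (conv n f g) ^ 2 := by
        rw [innerP_conv_left, conv_comm]
    _ ≤ innerP n f f * innerP n (conv n f g) (conv n f g) := innerP_sq_le _ _
    _ = innerP n f f * innerP n f (conv n f (conv n g g)) := by rw [innerP_conv_left, conv_assoc]

/-- The law of a random vector in `𝔽₂ⁿ` with independent coordinates, each equal to `1` with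
probability `θ`: convolution with it is the noise operator of rate `θ`. -/
def noiseKernel (n : ℕ) (θ : ℝ) (x : Fin n → ZMod 2) : ℝ :=
  ∏ i, if x i = 0 then 1 - θ else θ

theorem hammingNorm_add_card_filter_eq_zero (x : Fin n → ZMod 2) :
    hammingNorm x + #{i | x i = 0} = n := by
  rw [add_comm]
  simpa [hammingNorm] using card_filter_add_card_filter_not (s := univ) fun i => x i = 0

theorem noiseKernel_eq_pow_mul_pow (θ : ℝ) (x : Fin n → ZMod 2) :
    noiseKernel n θ x = θ ^ hammingNorm x * (1 - θ) ^ (n - hammingNorm x) := by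
  rw [noiseKernel, prod_ite, prod_const, prod_const, mul_comm,
    Nat.sub_eq_of_eq_add' (hammingNorm_add_card_filter_eq_zero x).symm]
  rfl

theorem noiseKernel_nonneg (hθ0 : 0 ≤ θ) (hθ1 : θ ≤ 1) (x : Fin n → ZMod 2) :
    0 ≤ noiseKernel n θ x :=
  prod_nonneg fun i _ => by split_ifs <;> linarith

theorem isLpKernelBound_bit (hp2 : p ≤ 2) (hθ : |1 - 2 * θ| ≤ p - 1) :
    IsLpKernelBound p p (2 * (2⁻¹ ^ (1 / p)) ^ 2)
      fun a b : ZMod 2 => if a + b = 0 then 1 - θ else θ := by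
  intro f g hf hg
  have key := two_point_bilinear_le hp2 hθ (hf 0) (hf 1) (hg 0) (hg 1)
  have hsum : ∀ F : ZMod 2 → ℝ, ∑ a, F a = F 0 + F 1 := Fin.sum_univ_two
  have hadd : (1 + 1 : ZMod 2) = 0 := by decide
  have hpow : ∀ F : ZMod 2 → ℝ, 0 ≤ F → 0 ≤ F 0 ^ p + F 1 ^ p := fun F hF =>
    add_nonneg (Real.rpow_nonneg (hF 0) p) (Real.rpow_nonneg (hF 1) p)
  rw [div_eq_mul_inv _ (2 : ℝ), div_eq_mul_inv _ (2 : ℝ), Real.mul_rpow (hpow f hf) (by norm_num),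
    Real.mul_rpow (hpow g hg) (by norm_num)] at key
  simp only [hsum, hadd, add_zero, zero_add, if_true, one_ne_zero, if_false]
  linarith

theorem innerP_conv_noiseKernel_le (hp2 : p ≤ 2) (hθ : |1 - 2 * θ| ≤ p - 1)
    (f g : (Fin n → ZMod 2) → ℝ) :
    innerP n f (conv n g (noiseKernel n θ)) ≤ pnormR n p f * pnormR n p g := by
  have hp1 : 1 ≤ p := by linarith [abs_nonneg (1 - 2 * θ)]
  have hθ' : |1 - 2 * θ| ≤ 1 := by linarith
  rw [abs_le] at hθ'
  have hbit := (isLpKernelBound_bit hp2 hθ).pi (by linarith) (by linarith)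
    (fun a b => by split_ifs <;> linarith) (by positivity) n
    |f| |g| (abs_nonneg f) (abs_nonneg g)
  have hnorm : ∀ F : (Fin n → ZMod 2) → ℝ,
      pnormR n p F = (2⁻¹ ^ (1 / p)) ^ n * (∑ x, |F x| ^ p) ^ (1 / p) := fun F => by
    rw [pnormR, Real.mul_rpow (by positivity) (by positivity), Real.rpow_neg zero_le_two,
      Real.rpow_natCast, ← inv_pow, Real.rpow_pow_comm (by norm_num)]
  calc innerP n f (conv n g (noiseKernel n θ))
      = (2 ^ n)⁻¹ * ∑ x, ∑ y, f x * g y * noiseKernel n θ (x + y) := by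
        rw [conv_comm]
        simp only [innerP, conv, mul_sum]
        exact sum_congr rfl fun x _ => sum_congr rfl fun y _ => by ring
    _ ≤ (2 ^ n)⁻¹ * ∑ x, ∑ y, |f x| * |g y| * noiseKernel n θ (x + y) := by
        gcongr (2 ^ n)⁻¹ * ∑ x, ∑ y, ?_ * _ with x _ y _
        · exact noiseKernel_nonneg (by linarith) (by linarith) _
        · exact (le_abs_self _).trans_eq (abs_mul _ _)
    _ ≤ (2 ^ n)⁻¹ * ((2 * (2⁻¹ ^ (1 / p)) ^ 2) ^ n * (∑ x, |f x| ^ p) ^ (1 / p) *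
          (∑ x, |g x| ^ p) ^ (1 / p)) := by
        gcongr
        exact hbit
    _ = pnormR n p f * pnormR n p g := by
        rw [hnorm, hnorm, mul_pow 2]
        field_simp
        ring

end Cube

section BinomialEstimates

open Nat (factorial choose)

/-- Stirling's approximation to `n !` without its constant factor `√(2π)`. -/
noncomputable def stirlingApprox (n : ℕ) : ℝ := √n * (n / Real.exp 1) ^ n

theorem stirlingApprox_mul_exp_pow (n : ℕ) :
    stirlingApprox n * Real.exp 1 ^ n = √n * (n : ℝ) ^ n := by
  rw [stirlingApprox, mul_assoc, ← mul_pow, div_mul_cancel₀ _ (Real.exp_ne_zero 1)]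

theorem stirlingApprox_nonneg (n : ℕ) : 0 ≤ stirlingApprox n := by
  unfold stirlingApprox
  positivity

theorem stirlingApprox_le_factorial (n : ℕ) : stirlingApprox n ≤ factorial n := by
  refine le_trans ?_ (Stirling.le_factorial_stirling n)
  unfold stirlingApprox
  gcongr
  exact le_mul_of_one_le_left n.cast_nonneg (by linarith [Real.pi_gt_three])

theorem factorial_le_three_mul_stirlingApprox {n : ℕ} (hn : n ≠ 0) :
    (factorial n : ℝ) ≤ 3 * stirlingApprox n := by
  obtain ⟨m, rfl⟩ := Nat.exists_eq_succ_of_ne_zero hn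
  have hanti : Stirling.stirlingSeq (m + 1) ≤ Real.exp 1 / √2 :=
    (Stirling.stirlingSeq'_antitone m.zero_le).trans_eq Stirling.stirlingSeq_one
  rw [Stirling.stirlingSeq, div_le_iff₀ (by positivity), Real.sqrt_mul zero_le_two] at hanti
  calc (factorial (m + 1) : ℝ) ≤ Real.exp 1 * stirlingApprox (m + 1) := by
        refine hanti.trans_eq ?_
        rw [stirlingApprox]
        field_simp
    _ ≤ 3 * stirlingApprox (m + 1) :=
        mul_le_mul_of_nonneg_right Real.exp_one_lt_three.le (stirlingApprox_nonneg _)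

variable {a b : ℕ}

theorem cast_add_choose_mul_factorial_mul_factorial (a b : ℕ) :
    (choose (a + b) a : ℝ) * (factorial a * factorial b) = factorial (a + b) := by
  rw [Nat.choose_symm_add, ← mul_assoc]
  exact_mod_cast Nat.add_choose_mul_factorial_mul_factorial a b

theorem choose_mul_sqrt_mul_pow_le (ha : a ≠ 0) :
    choose (a + b) a * ((√a * (a : ℝ) ^ a) * (√b * (b : ℝ) ^ b)) ≤
      3 * (√(a + b : ℕ) * ((a + b : ℕ) : ℝ) ^ (a + b)) := by
  have hS : choose (a + b) a * (stirlingApprox a * stirlingApprox b) ≤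
      3 * stirlingApprox (a + b) := by
    calc choose (a + b) a * (stirlingApprox a * stirlingApprox b)
        ≤ choose (a + b) a * (factorial a * factorial b) := by
          gcongr
          · exact stirlingApprox_nonneg b
          · exact stirlingApprox_le_factorial a
          · exact stirlingApprox_le_factorial b
      _ = factorial (a + b) := cast_add_choose_mul_factorial_mul_factorial a b
      _ ≤ 3 * stirlingApprox (a + b) := factorial_le_three_mul_stirlingApprox (by omega)
  simp only [← stirlingApprox_mul_exp_pow]
  have hmul := mul_le_mul_of_nonneg_right hS (pow_nonneg (Real.exp_nonneg 1) (a + b))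
  rw [pow_add] at hmul ⊢
  linarith

theorem sqrt_mul_pow_le_choose_mul (ha : a ≠ 0) (hb : b ≠ 0) :
    √(a + b : ℕ) * ((a + b : ℕ) : ℝ) ^ (a + b) ≤
      9 * (choose (a + b) a * ((√a * (a : ℝ) ^ a) * (√b * (b : ℝ) ^ b))) := by
  have hS : stirlingApprox (a + b) ≤
      choose (a + b) a * ((3 * stirlingApprox a) * (3 * stirlingApprox b)) := by
    calc stirlingApprox (a + b) ≤ factorial (a + b) := stirlingApprox_le_factorial _
      _ = choose (a + b) a * (factorial a * factorial b) :=
          (cast_add_choose_mul_factorial_mul_factorial a b).symm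
      _ ≤ choose (a + b) a * ((3 * stirlingApprox a) * (3 * stirlingApprox b)) := by
          gcongr
          · exact mul_nonneg zero_le_three (stirlingApprox_nonneg a)
          · exact factorial_le_three_mul_stirlingApprox ha
          · exact factorial_le_three_mul_stirlingApprox hb
  simp only [← stirlingApprox_mul_exp_pow]
  have hmul := mul_le_mul_of_nonneg_right hS (pow_nonneg (Real.exp_nonneg 1) (a + b))
  rw [pow_add] at hmul ⊢
  linarith

theorem pow_le_exp_mul_sub_one {t : ℝ} (ht : 0 ≤ t) (a : ℕ) :
    t ^ a ≤ Real.exp (a * (t - 1)) := by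
  rw [Real.exp_nat_mul]
  gcongr
  linarith [Real.add_one_le_exp (t - 1)]

variable {x y : ℝ}

theorem add_pow_mul_pow_mul_pow_le (ha : a ≠ 0) (hb : b ≠ 0) (hx : 0 < x) (hy : 0 < y) :
    ((a + b : ℕ) : ℝ) ^ (a + b) * (x ^ a * y ^ b) ≤
      (a : ℝ) ^ a * (b : ℝ) ^ b * (x + y) ^ (a + b) := by
  have : (0 : ℝ) < a := Nat.cast_pos.2 (Nat.pos_of_ne_zero ha)
  have : (0 : ℝ) < b := Nat.cast_pos.2 (Nat.pos_of_ne_zero hb)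
  have hprod : (x * (a + b) / (a * (x + y))) ^ a * (y * (a + b) / (b * (x + y))) ^ b ≤ 1 := by
    calc (x * (a + b) / (a * (x + y))) ^ a * (y * (a + b) / (b * (x + y))) ^ b
        ≤ Real.exp (a * (x * (a + b) / (a * (x + y)) - 1)) *
            Real.exp (b * (y * (a + b) / (b * (x + y)) - 1)) := by
          gcongr <;> exact pow_le_exp_mul_sub_one (by positivity) _
      _ = 1 := by
          rw [← Real.exp_add, Real.exp_eq_one_iff]
          field_simp
          ring
  simp only [div_pow, mul_pow] at hprod
  rw [div_mul_div_comm, div_le_one (by positivity)] at hprod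
  push_cast
  rw [pow_add, pow_add]
  linarith

theorem choose_mul_pow_mul_pow_mul_sqrt_le (ha : a ≠ 0) (hb : b ≠ 0) (hx : 0 < x) (hy : 0 < y) :
    choose (a + b) a * x ^ a * y ^ b * (√a * √b) ≤ 3 * √(a + b : ℕ) * (x + y) ^ (a + b) := by
  have : (0 : ℝ) < a := Nat.cast_pos.2 (Nat.pos_of_ne_zero ha)
  have : (0 : ℝ) < b := Nat.cast_pos.2 (Nat.pos_of_ne_zero hb)
  refine le_of_mul_le_mul_right ?_ (show 0 < (a : ℝ) ^ a * (b : ℝ) ^ b by positivity)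
  calc choose (a + b) a * x ^ a * y ^ b * (√a * √b) * ((a : ℝ) ^ a * (b : ℝ) ^ b)
      = choose (a + b) a * ((√a * (a : ℝ) ^ a) * (√b * (b : ℝ) ^ b)) * (x ^ a * y ^ b) := by ring
    _ ≤ 3 * (√(a + b : ℕ) * ((a + b : ℕ) : ℝ) ^ (a + b)) * (x ^ a * y ^ b) := by
        exact mul_le_mul_of_nonneg_right (choose_mul_sqrt_mul_pow_le ha) (by positivity)
    _ = 3 * √(a + b : ℕ) * (((a + b : ℕ) : ℝ) ^ (a + b) * (x ^ a * y ^ b)) := by ring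
    _ ≤ 3 * √(a + b : ℕ) * ((a : ℝ) ^ a * (b : ℝ) ^ b * (x + y) ^ (a + b)) := by
        exact mul_le_mul_of_nonneg_left (add_pow_mul_pow_mul_pow_le ha hb hx hy) (by positivity)
    _ = 3 * √(a + b : ℕ) * (x + y) ^ (a + b) * ((a : ℝ) ^ a * (b : ℝ) ^ b) := by ring

theorem mul_choose_mul_pow_mul_pow_le {m : ℝ} {N : ℕ} (hm : 0 < m) (hma : m ≤ a) (hmb : m ≤ b)
    (hN : a + b ≤ N) (hx : 0 < x) (hy : 0 < y) :
    m * (choose (a + b) a * x ^ a * y ^ b) ≤ 3 * √N * (x + y) ^ (a + b) := by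
  have ha : a ≠ 0 := Nat.cast_ne_zero.1 (hm.trans_le hma).ne'
  have hb : b ≠ 0 := Nat.cast_ne_zero.1 (hm.trans_le hmb).ne'
  calc m * (choose (a + b) a * x ^ a * y ^ b)
      = choose (a + b) a * x ^ a * y ^ b * (√m * √m) := by
        rw [Real.mul_self_sqrt hm.le, mul_comm]
    _ ≤ choose (a + b) a * x ^ a * y ^ b * (√a * √b) := by gcongr
    _ ≤ 3 * √(a + b : ℕ) * (x + y) ^ (a + b) := choose_mul_pow_mul_pow_mul_sqrt_le ha hb hx hy
    _ ≤ 3 * √N * (x + y) ^ (a + b) := by gcongr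

theorem choose_mul_pow_mul_pow_le_add_pow (a b : ℕ) (hx : 0 ≤ x) (hy : 0 ≤ y) :
    choose (a + b) a * x ^ a * y ^ b ≤ (x + y) ^ (a + b) := by
  rw [add_pow]
  calc choose (a + b) a * x ^ a * y ^ b = x ^ a * y ^ (a + b - a) * choose (a + b) a := by
        rw [Nat.add_sub_cancel_left]
        ring
    _ ≤ ∑ k ∈ range (a + b + 1), x ^ k * y ^ (a + b - k) * choose (a + b) k :=
        single_le_sum (f := fun k => x ^ k * y ^ (a + b - k) * (choose (a + b) k : ℝ))
          (fun k _ => by positivity) (mem_range.2 (by omega))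

theorem one_le_sqrt_mul_choose_mul_pow_mul_pow (ha : a ≠ 0) (hb : b ≠ 0) :
    1 ≤ 9 * √(a + b : ℕ) *
      (choose (a + b) a * (a / (a + b : ℕ) : ℝ) ^ a * (b / (a + b : ℕ) : ℝ) ^ b) := by
  have hab : (0 : ℝ) < (a + b : ℕ) := Nat.cast_pos.2 (by omega)
  have hsqrt : √(a : ℝ) * √(b : ℝ) ≤ √(a + b : ℕ) * √(a + b : ℕ) := by
    gcongr <;> omega
  have hpow : √(a + b : ℕ) * ((a + b : ℕ) : ℝ) ^ (a + b) ≤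
      √(a + b : ℕ) * (9 * √(a + b : ℕ) * (choose (a + b) a * (a : ℝ) ^ a * (b : ℝ) ^ b)) := by
    calc √(a + b : ℕ) * ((a + b : ℕ) : ℝ) ^ (a + b)
        ≤ 9 * (choose (a + b) a * ((√a * (a : ℝ) ^ a) * (√b * (b : ℝ) ^ b))) :=
          sqrt_mul_pow_le_choose_mul ha hb
      _ = 9 * (choose (a + b) a * (a : ℝ) ^ a * (b : ℝ) ^ b) * (√a * √b) := by ring
      _ ≤ 9 * (choose (a + b) a * (a : ℝ) ^ a * (b : ℝ) ^ b) *
            (√(a + b : ℕ) * √(a + b : ℕ)) := by gcongr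
      _ = _ := by ring
  have hpow' := le_of_mul_le_mul_left hpow (Real.sqrt_pos.2 hab)
  calc (1 : ℝ) = ((a + b : ℕ) : ℝ) ^ (a + b) / ((a + b : ℕ) : ℝ) ^ (a + b) :=
        (div_self (by positivity)).symm
    _ ≤ 9 * √(a + b : ℕ) * (choose (a + b) a * (a : ℝ) ^ a * (b : ℝ) ^ b) /
          ((a + b : ℕ) : ℝ) ^ (a + b) := by gcongr
    _ = _ := by
        rw [div_pow, div_pow, pow_add _ a b]
        field_simp

end BinomialEstimates

section ExponentialTilting

variable {α t : ℝ}

/-- The success probability of the Bernoulli law of parameter `α` after reweighting the outcome `1`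
by the factor `e ^ t`. -/
noncomputable def expTilt (α t : ℝ) : ℝ :=
  α * Real.exp t / (1 - α + α * Real.exp t)

theorem expTilt_zero (α : ℝ) : expTilt α 0 = α := by
  simp [expTilt]

theorem one_sub_add_mul_exp_pos (hα0 : 0 ≤ α) (hα1 : α ≤ 1) (t : ℝ) :
    0 < 1 - α + α * Real.exp t := by
  rcases hα1.lt_or_eq with h | rfl
  · have := mul_nonneg hα0 (Real.exp_nonneg t)
    linarith
  · simpa using Real.exp_pos t

theorem one_sub_expTilt (hα0 : 0 ≤ α) (hα1 : α ≤ 1) (t : ℝ) :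
    1 - expTilt α t = (1 - α) / (1 - α + α * Real.exp t) := by
  rw [expTilt, eq_div_iff (one_sub_add_mul_exp_pos hα0 hα1 t).ne', sub_mul,
    div_mul_cancel₀ _ (one_sub_add_mul_exp_pos hα0 hα1 t).ne']
  ring

theorem one_sub_expTilt_eq_expTilt_neg (hα0 : 0 ≤ α) (hα1 : α ≤ 1) (t : ℝ) :
    1 - expTilt α t = expTilt (1 - α) (-t) := by
  rw [one_sub_expTilt hα0 hα1, expTilt, sub_sub_cancel,
    ← mul_div_mul_right _ _ (Real.exp_ne_zero (-t)), add_mul, mul_assoc α,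
    ← Real.exp_add, add_neg_cancel, Real.exp_zero, mul_one, add_comm]

theorem expTilt_nonneg (hα0 : 0 ≤ α) (hα1 : α ≤ 1) (t : ℝ) : 0 ≤ expTilt α t :=
  div_nonneg (mul_nonneg hα0 (Real.exp_nonneg t)) (one_sub_add_mul_exp_pos hα0 hα1 t).le

theorem expTilt_le_one (hα0 : 0 ≤ α) (hα1 : α ≤ 1) (t : ℝ) : expTilt α t ≤ 1 := by
  rw [← sub_nonneg, one_sub_expTilt_eq_expTilt_neg hα0 hα1]
  exact expTilt_nonneg (by linarith) (by linarith) _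

theorem div_nine_le_expTilt (hα0 : 0 ≤ α) (hα1 : α ≤ 1) (ht : |t| ≤ 1) : α / 9 ≤ expTilt α t := by
  obtain ⟨ht1, ht2⟩ := abs_le.1 ht
  have hupper : Real.exp t ≤ 3 :=
    (Real.exp_le_exp.2 ht2).trans Real.exp_one_lt_three.le
  have hlower : 1 / 3 ≤ Real.exp t := by
    calc (1 / 3 : ℝ) ≤ (Real.exp 1)⁻¹ := by
          rw [one_div]
          exact inv_anti₀ (Real.exp_pos 1) Real.exp_one_lt_three.le
      _ = Real.exp (-1) := (Real.exp_neg 1).symm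
      _ ≤ Real.exp t := Real.exp_le_exp.2 ht1
  have hZ : 1 - α + α * Real.exp t ≤ 3 := by nlinarith
  rw [expTilt, le_div_iff₀ (one_sub_add_mul_exp_pos hα0 hα1 t)]
  calc α / 9 * (1 - α + α * Real.exp t) ≤ α / 9 * 3 := by gcongr
    _ = α * (1 / 3) := by ring
    _ ≤ α * Real.exp t := by gcongr

theorem one_sub_div_nine_le_one_sub_expTilt (hα0 : 0 ≤ α) (hα1 : α ≤ 1) (ht : |t| ≤ 1) :
    (1 - α) / 9 ≤ 1 - expTilt α t := by
  rw [one_sub_expTilt_eq_expTilt_neg hα0 hα1]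
  exact div_nine_le_expTilt (by linarith) (by linarith) (by rwa [abs_neg])

theorem pow_mul_pow_le_exp_mul_expTilt (hα0 : 0 ≤ α) (hα1 : α ≤ 1) (ht : |t| ≤ 1) (w r : ℕ) :
    α ^ w * (1 - α) ^ r ≤ Real.exp ((w + r) * (α * (t + t ^ 2)) - w * t) *
      (expTilt α t ^ w * (1 - expTilt α t) ^ r) := by
  have hZ := one_sub_add_mul_exp_pos hα0 hα1 t
  have hZ_le : 1 - α + α * Real.exp t ≤ Real.exp (α * (t + t ^ 2)) := by
    have hexp := (abs_le.1 (Real.abs_exp_sub_one_sub_id_le ht)).2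
    calc 1 - α + α * Real.exp t = α * (Real.exp t - 1) + 1 := by ring
      _ ≤ α * (t + t ^ 2) + 1 := by gcongr; linarith
      _ ≤ Real.exp (α * (t + t ^ 2)) := Real.add_one_le_exp _
  have : 0 ≤ 1 - α := by linarith
  rw [one_sub_expTilt hα0 hα1, expTilt, Real.exp_sub, ← Nat.cast_add, Real.exp_nat_mul,
    Real.exp_nat_mul]
  calc α ^ w * (1 - α) ^ r
      = (1 - α + α * Real.exp t) ^ (w + r) / (1 - α + α * Real.exp t) ^ (w + r) *
          (α ^ w * (1 - α) ^ r) := by rw [div_self (by positivity), one_mul]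
    _ ≤ Real.exp (α * (t + t ^ 2)) ^ (w + r) / (1 - α + α * Real.exp t) ^ (w + r) *
          (α ^ w * (1 - α) ^ r) := by gcongr
    _ = _ := by
        rw [div_pow, div_pow, mul_pow, pow_add (1 - α + _)]
        field_simp

theorem mul_exp_neg_mul_le (x : ℝ) {s : ℝ} (hs : 0 < s) : x * Real.exp (-(x * s)) ≤ 1 / s := by
  rw [le_div_iff₀ hs]
  calc x * Real.exp (-(x * s)) * s = x * s * Real.exp (-(x * s)) := by ring
    _ ≤ Real.exp (-1) := Real.mul_exp_neg_le_exp_neg_one _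
    _ ≤ 1 := Real.exp_le_one_iff.2 (by norm_num)

-- For `w` beyond `(α + t) (w + r)`, on the side of the sign of `t`, the tilt gains a factor
-- exponential in `w + r`, which pays for the linear factor on the left.
theorem mul_pow_mul_pow_le_expTilt {w r : ℕ} (hα0 : 0 ≤ α) (hα : α ≤ 1 / 2) (ht : |t| ≤ 1)
    (ht0 : t ≠ 0) (hw : t ^ 2 * (w + r : ℕ) ≤ t * (w - α * (w + r : ℕ))) :
    (w + r : ℕ) * (α ^ w * (1 - α) ^ r) ≤
      2 / t ^ 2 * (expTilt α t ^ w * (1 - expTilt α t) ^ r) := by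
  have hα1 : α ≤ 1 := by linarith
  have hθ0 := expTilt_nonneg hα0 hα1 t
  have hθ1 := sub_nonneg.2 (expTilt_le_one hα0 hα1 t)
  have hexponent : ((w : ℝ) + r) * (α * (t + t ^ 2)) - w * t ≤
      -((w + r : ℕ) * (t ^ 2 / 2)) := by
    have hαt : α * (t ^ 2 * (w + r : ℕ)) ≤ 1 / 2 * (t ^ 2 * (w + r : ℕ)) := by gcongr
    push_cast at hw hαt ⊢
    linarith
  calc (w + r : ℕ) * (α ^ w * (1 - α) ^ r)
      ≤ (w + r : ℕ) * (Real.exp (-((w + r : ℕ) * (t ^ 2 / 2))) *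
          (expTilt α t ^ w * (1 - expTilt α t) ^ r)) := by
        refine mul_le_mul_of_nonneg_left ?_ (Nat.cast_nonneg _)
        refine (pow_mul_pow_le_exp_mul_expTilt hα0 hα1 ht w r).trans ?_
        gcongr
    _ = (w + r : ℕ) * Real.exp (-((w + r : ℕ) * (t ^ 2 / 2))) *
          (expTilt α t ^ w * (1 - expTilt α t) ^ r) := by ring
    _ ≤ 1 / (t ^ 2 / 2) * (expTilt α t ^ w * (1 - expTilt α t) ^ r) := by
        gcongr
        exact mul_exp_neg_mul_le _ (by positivity)
    _ = 2 / t ^ 2 * (expTilt α t ^ w * (1 - expTilt α t) ^ r) := by rw [one_div_div]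

end ExponentialTilting

section IntersectionNumbers

open Nat (choose)

variable {i k l : ℕ} {p q δ ε t : ℝ}

theorem two_mul_mul_le_one_half (hpq : p + q = 1) : 2 * p * q ≤ 1 / 2 := by
  nlinarith [two_mul_le_add_sq p q]

theorem mul_eq_add_of_mul_eq_add (hpq : p + q = 1) (hik : p * (i + i + (k + l) : ℕ) = i + k) :
    q * (i + i + (k + l) : ℕ) = i + l := by
  push_cast at hik ⊢
  linear_combination (i + i + (k + l) : ℝ) * hpq - hik

theorem choose_mul_choose_mul_pow_eq (i k l : ℕ) (p q : ℝ) :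
    (choose (i + i) i * choose (k + l) k : ℝ) * (p ^ (i + k) * q ^ (i + l)) ^ 2 =
      (choose (i + i) i * (p * q) ^ i * (p * q) ^ i) *
        (choose (k + l) k * (p ^ 2) ^ k * (q ^ 2) ^ l) := by
  ring

theorem choose_mul_choose_mul_pow_le (i k l : ℕ) (hp : 0 ≤ p) (hq : 0 ≤ q) :
    (choose (i + i) i * choose (k + l) k : ℝ) * (p ^ (i + k) * q ^ (i + l)) ^ 2 ≤
      (2 * p * q) ^ (i + i) * (p ^ 2 + q ^ 2) ^ (k + l) := by
  rw [choose_mul_choose_mul_pow_eq, show 2 * p * q = p * q + p * q by ring]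
  gcongr <;> exact choose_mul_pow_mul_pow_le_add_pow _ _ (by positivity) (by positivity)

theorem mul_choose_mul_choose_mul_pow_le (hp : 0 < p) (hq : 0 < q) (hδ : 0 < δ)
    (hn : 0 < i + i + (k + l))
    (hi : δ * (i + i + (k + l) : ℕ) ≤ i) (hk : δ * (i + i + (k + l) : ℕ) ≤ k)
    (hl : δ * (i + i + (k + l) : ℕ) ≤ l) :
    (i + i + (k + l) : ℕ) *
        ((choose (i + i) i * choose (k + l) k : ℝ) * (p ^ (i + k) * q ^ (i + l)) ^ 2) ≤
      9 / δ ^ 2 * ((2 * p * q) ^ (i + i) * (p ^ 2 + q ^ 2) ^ (k + l)) := by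
  rw [choose_mul_choose_mul_pow_eq, show 2 * p * q = p * q + p * q by ring]
  generalize hN : i + i + (k + l) = n at *
  have hn' : (0 : ℝ) < n := Nat.cast_pos.2 hn
  have hi' := mul_choose_mul_pow_mul_pow_le (N := n) (by positivity) hi hi (by omega)
    (mul_pos hp hq) (mul_pos hp hq)
  have hkl := mul_choose_mul_pow_mul_pow_le (N := n) (by positivity) hk hl (by omega)
    (pow_pos hp 2) (pow_pos hq 2)
  have hprod := mul_le_mul hi' hkl (by positivity) (by positivity)
  rw [div_mul_eq_mul_div, le_div_iff₀ (by positivity)]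
  refine le_of_mul_le_mul_left ?_ hn'
  calc _ = _ := by ring
    _ ≤ _ := hprod
    _ = 9 * (√n * √n) * ((p * q + p * q) ^ (i + i) * (p ^ 2 + q ^ 2) ^ (k + l)) := by ring
    _ = n * (9 * ((p * q + p * q) ^ (i + i) * (p ^ 2 + q ^ 2) ^ (k + l))) := by
        rw [Real.mul_self_sqrt hn'.le]
        ring

theorem mul_choose_mul_choose_mul_pow_le_of_abs_sub_le (hε : 0 < ε) (hp : ε ≤ p) (hq : ε ≤ q)
    (hpq : p + q = 1) (hn : 0 < i + i + (k + l))
    (hik : p * (i + i + (k + l) : ℕ) = i + k)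
    (hi : |((i + i : ℕ) : ℝ) - 2 * p * q * (i + i + (k + l) : ℕ)| ≤
      ε ^ 2 * (i + i + (k + l) : ℕ)) :
    (i + i + (k + l) : ℕ) *
        ((choose (i + i) i * choose (k + l) k : ℝ) * (p ^ (i + k) * q ^ (i + l)) ^ 2) ≤
      36 / ε ^ 4 * ((2 * p * q) ^ (i + i) * (p ^ 2 + q ^ 2) ^ (k + l)) := by
  have hil := mul_eq_add_of_mul_eq_add hpq hik
  obtain ⟨hi₁, hi₂⟩ := abs_le.1 hi
  rw [Nat.cast_add i i] at hi₁ hi₂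
  have scale {a b : ℝ} (ha : ε ≤ a) (hb : ε ≤ b) :
      ε ^ 2 * (i + i + (k + l) : ℕ) ≤ a * b * (i + i + (k + l) : ℕ) := by
    rw [pow_two]
    gcongr
    exact hε.le.trans ha
  have hsplit (a : ℝ) : a * (i + i + (k + l) : ℕ) =
      a * p * (i + i + (k + l) : ℕ) + a * q * (i + i + (k + l) : ℕ) := by
    rw [← add_mul, ← mul_add, hpq, mul_one]
  have hpp := scale hp hp
  have hpq' := scale hp hq
  have hqq := scale hq hq
  have hsp := hsplit p
  have hsq := hsplit q
  have key := mul_choose_mul_choose_mul_pow_le (δ := ε ^ 2 / 2) (hε.trans_le hp) (hε.trans_le hq)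
    (by positivity) hn (by linarith) (by linarith) (by linarith)
  exact key.trans_eq (by field_simp; ring)

theorem mul_choose_mul_choose_mul_pow_le_expTilt (hp : 0 ≤ p) (hq : 0 ≤ q) (hpq : p + q = 1)
    (ht : |t| ≤ 1) (ht0 : t ≠ 0)
    (hi : t ^ 2 * (i + i + (k + l) : ℕ) ≤
      t * (((i + i : ℕ) : ℝ) - 2 * p * q * (i + i + (k + l) : ℕ))) :
    (i + i + (k + l) : ℕ) *
        ((choose (i + i) i * choose (k + l) k : ℝ) * (p ^ (i + k) * q ^ (i + l)) ^ 2) ≤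
      2 / t ^ 2 * (expTilt (2 * p * q) t ^ (i + i) * (1 - expTilt (2 * p * q) t) ^ (k + l)) := by
  refine le_trans ?_ (mul_pow_mul_pow_le_expTilt (by positivity) (two_mul_mul_le_one_half hpq) ht
    ht0 hi)
  rw [show 1 - 2 * p * q = p ^ 2 + q ^ 2 by linear_combination -(p + q + 1) * hpq]
  exact mul_le_mul_of_nonneg_left (choose_mul_choose_mul_pow_le i k l hp hq) (Nat.cast_nonneg _)

theorem exists_mul_choose_mul_choose_mul_pow_le (hε : 0 < ε) (hp : ε ≤ p) (hq : ε ≤ q)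
    (hpq : p + q = 1) (hn : 0 < i + i + (k + l))
    (hik : p * (i + i + (k + l) : ℕ) = i + k) :
    ∃ t ∈ ({0, ε ^ 2, -ε ^ 2} : Finset ℝ), (i + i + (k + l) : ℕ) *
        ((choose (i + i) i * choose (k + l) k : ℝ) * (p ^ (i + k) * q ^ (i + l)) ^ 2) ≤
      36 / ε ^ 4 *
        (expTilt (2 * p * q) t ^ (i + i) * (1 - expTilt (2 * p * q) t) ^ (k + l)) := by
  rcases le_or_gt |((i + i : ℕ) : ℝ) - 2 * p * q * (i + i + (k + l) : ℕ)|
    (ε ^ 2 * (i + i + (k + l) : ℕ)) with hcentral | houter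
  · refine ⟨0, by simp, ?_⟩
    rw [expTilt_zero, show 1 - 2 * p * q = p ^ 2 + q ^ 2 by linear_combination -(p + q + 1) * hpq]
    exact mul_choose_mul_choose_mul_pow_le_of_abs_sub_le hε hp hq hpq hn hik hcentral
  obtain ⟨t, ht_mem, ht, hi⟩ : ∃ t ∈ ({0, ε ^ 2, -ε ^ 2} : Finset ℝ), |t| = ε ^ 2 ∧
      t ^ 2 * (i + i + (k + l) : ℕ) ≤
        t * (((i + i : ℕ) : ℝ) - 2 * p * q * (i + i + (k + l) : ℕ)) := by
    rcases lt_abs.1 houter with hright | hleft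
    · refine ⟨ε ^ 2, by simp, abs_of_nonneg (by positivity), ?_⟩
      rw [pow_two (ε ^ 2), mul_assoc]
      gcongr
    · refine ⟨-ε ^ 2, by simp, (abs_neg _).trans (abs_of_nonneg (by positivity)), ?_⟩
      rw [neg_sq, pow_two (ε ^ 2), mul_assoc, neg_mul_comm]
      gcongr
  have hp0 : 0 ≤ p := hε.le.trans hp
  have hq0 : 0 ≤ q := hε.le.trans hq
  have hα0 : 0 ≤ 2 * p * q := by positivity
  have hα1 : 2 * p * q ≤ 1 := (two_mul_mul_le_one_half hpq).trans (by norm_num)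
  have hθ0 := expTilt_nonneg hα0 hα1 t
  have hθ1 := sub_nonneg.2 (expTilt_le_one hα0 hα1 t)
  have ht1 : |t| ≤ 1 := ht.trans_le (pow_le_one₀ hε.le (by linarith))
  have ht0 : t ≠ 0 := abs_pos.1 (ht ▸ by positivity)
  refine ⟨t, ht_mem,
    (mul_choose_mul_choose_mul_pow_le_expTilt hp0 hq0 hpq ht1 ht0 hi).trans ?_⟩
  rw [← sq_abs t, ht, ← pow_mul]
  gcongr
  norm_num

theorem exists_choose_mul_choose_le (hε : 0 < ε) (hp : ε ≤ p) (hq : ε ≤ q)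
    (hpq : p + q = 1) (hn : 0 < i + i + (k + l))
    (hik : p * (i + i + (k + l) : ℕ) = i + k) :
    ∃ t ∈ ({0, ε ^ 2, -ε ^ 2} : Finset ℝ), (choose (i + i) i * choose (k + l) k : ℝ) ≤
      2916 / ε ^ 4 * choose (i + i + (k + l)) (i + k) ^ 2 *
        (expTilt (2 * p * q) t ^ (i + i) * (1 - expTilt (2 * p * q) t) ^ (k + l)) := by
  obtain ⟨t, ht, hupper⟩ := exists_mul_choose_mul_choose_mul_pow_le hε hp hq hpq hn hik
  refine ⟨t, ht, ?_⟩
  have hil := mul_eq_add_of_mul_eq_add hpq hik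
  have hj : i + k + (i + l) = i + i + (k + l) := by omega
  set n := i + i + (k + l)
  have hn' : (0 : ℝ) < n := Nat.cast_pos.2 hn
  rw [← Nat.cast_add] at hik hil
  have hik0 : ((i + k : ℕ) : ℝ) ≠ 0 := hik ▸ (mul_pos (hε.trans_le hp) hn').ne'
  have hil0 : ((i + l : ℕ) : ℝ) ≠ 0 := hil ▸ (mul_pos (hε.trans_le hq) hn').ne'
  have hlower := one_le_sqrt_mul_choose_mul_pow_mul_pow (Nat.cast_ne_zero.1 hik0)
    (Nat.cast_ne_zero.1 hil0)
  rw [hj, ← hik, ← hil, mul_div_cancel_right₀ _ hn'.ne', mul_div_cancel_right₀ _ hn'.ne'] at hlower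
  set X : ℝ := choose (i + i) i * choose (k + l) k
  calc X = X * 1 := (mul_one X).symm
    _ ≤ X * (9 * √n * (choose n (i + k) * p ^ (i + k) * q ^ (i + l))) ^ 2 := by
        gcongr
        exact one_le_pow₀ hlower
    _ = 81 * choose n (i + k) ^ 2 * (√n ^ 2 * (X * (p ^ (i + k) * q ^ (i + l)) ^ 2)) := by ring
    _ ≤ 81 * choose n (i + k) ^ 2 * (36 / ε ^ 4 *
          (expTilt (2 * p * q) t ^ (i + i) * (1 - expTilt (2 * p * q) t) ^ (k + l))) := by
        rw [Real.sq_sqrt hn'.le]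
        gcongr
    _ = _ := by ring

end IntersectionNumbers

section SphereCorrelation

open Nat (choose)

variable {n i j k l : ℕ} {ε : ℝ}

theorem hammingNorm_eq_card_add_card (z w : Fin n → ZMod 2) :
    hammingNorm z = #{a | z a ≠ 0 ∧ w a ≠ 0} + #{a | z a ≠ 0 ∧ w a = 0} := by
  rw [hammingNorm, ← card_filter_add_card_filter_not (fun a => w a ≠ 0), filter_filter,
    filter_filter]
  simp only [not_not]

theorem hammingNorm_add_add_two_mul_card (z w : Fin n → ZMod 2) :
    hammingNorm (z + w) + 2 * #{a | z a ≠ 0 ∧ w a ≠ 0} = hammingNorm z + hammingNorm w := by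
  have hbit : ∀ a b : ZMod 2,
      (if a + b ≠ 0 then 1 else 0) + 2 * (if a ≠ 0 ∧ b ≠ 0 then 1 else 0) =
        (if a ≠ 0 then 1 else 0) + (if b ≠ 0 then 1 else 0) := by decide
  simp only [hammingNorm, card_filter, mul_sum, ← sum_add_distrib, Pi.add_apply, hbit]

theorem card_support_inter_of_hammingNorm_eq {z w : Fin n → ZMod 2} (hz : hammingNorm z = j)
    (hzw : hammingNorm (z + w) = j) :
    2 * #{a | z a ≠ 0 ∧ w a ≠ 0} = hammingNorm w ∧
      #{a | z a ≠ 0 ∧ w a ≠ 0} + #{a | z a ≠ 0 ∧ w a = 0} = j := by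
  have hadd := hammingNorm_add_add_two_mul_card z w
  have hsplit := hammingNorm_eq_card_add_card z w
  omega

theorem exists_hammingNorm_eq_add_self {z w : Fin n → ZMod 2} (hz : hammingNorm z = j)
    (hzw : hammingNorm (z + w) = j) :
    ∃ i k l, hammingNorm w = i + i ∧ j = i + k ∧ n = i + i + (k + l) := by
  obtain ⟨hi, hk⟩ := card_support_inter_of_hammingNorm_eq hz hzw
  have hw := hammingNorm_add_card_filter_eq_zero w
  have hle : #{a | z a ≠ 0 ∧ w a = 0} ≤ #{a | w a = 0} :=
    card_le_card (monotone_filter_right _ fun _ _ h => h.2)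
  exact ⟨#{a | z a ≠ 0 ∧ w a ≠ 0}, #{a | z a ≠ 0 ∧ w a = 0},
    #{a | w a = 0} - #{a | z a ≠ 0 ∧ w a = 0}, by omega, by omega, by omega⟩

theorem support_pair_injective (w : Fin n → ZMod 2) :
    Function.Injective fun z : Fin n → ZMod 2 =>
      (({a | z a ≠ 0 ∧ w a ≠ 0} : Finset (Fin n)), ({a | z a ≠ 0 ∧ w a = 0} : Finset (Fin n))) := by
  have hbit : ∀ x y b : ZMod 2, (x ≠ 0 ∧ b ≠ 0 ↔ y ≠ 0 ∧ b ≠ 0) →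
      (x ≠ 0 ∧ b = 0 ↔ y ≠ 0 ∧ b = 0) → x = y := by decide
  intro z z' h
  simp only [Prod.mk.injEq, Finset.ext_iff, mem_filter, mem_univ, true_and] at h
  exact funext fun a => hbit _ _ _ (h.1 a) (h.2 a)

theorem card_sphere_inter_translate_le {w : Fin n → ZMod 2} (hw : hammingNorm w = i + i)
    (hn : n = i + i + (k + l)) :
    #{z | hammingNorm z = i + k ∧ hammingNorm (z + w) = i + k} ≤
      choose (i + i) i * choose (k + l) k := by
  have hzero : #{a | w a = 0} = k + l := by
    have := hammingNorm_add_card_filter_eq_zero w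
    omega
  calc #{z | hammingNorm z = i + k ∧ hammingNorm (z + w) = i + k}
      ≤ #(powersetCard i {a | w a ≠ 0} ×ˢ powersetCard k {a | w a = 0}) := by
        refine card_le_card_of_injOn _ (fun z hz => ?_) (support_pair_injective w).injOn
        obtain ⟨hz, hzw⟩ := (mem_filter.1 hz).2
        obtain ⟨hi, hk⟩ := card_support_inter_of_hammingNorm_eq hz hzw
        have hi' : #{a | z a ≠ 0 ∧ w a ≠ 0} = i := by omega
        have hk' : #{a | z a ≠ 0 ∧ w a = 0} = k := by omega
        exact mem_coe.2 <| mem_product.2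
          ⟨mem_powersetCard.2 ⟨monotone_filter_right _ fun _ _ h => h.2, hi'⟩,
            mem_powersetCard.2 ⟨monotone_filter_right _ fun _ _ h => h.2, hk'⟩⟩
    _ = choose (i + i) i * choose (k + l) k := by
        rw [card_product, card_powersetCard, card_powersetCard, hzero, ← hw, hammingNorm]

theorem conv_sphereInd_self_apply (n j : ℕ) (w : Fin n → ZMod 2) :
    conv n (sphereInd n j) (sphereInd n j) w =
      #{z : Fin n → ZMod 2 | hammingNorm z = j ∧ hammingNorm (z + w) = j} := by
  simp only [conv, sphereInd, ← ite_and, mul_ite, mul_one, mul_zero, sum_boole, add_comm w]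

theorem conv_sphereInd_self_le (hε : 0 < ε) (hn : 0 < n) (hj : ε * n ≤ j)
    (hj' : (j : ℝ) ≤ (1 - ε) * n) (w : Fin n → ZMod 2) :
    conv n (sphereInd n j) (sphereInd n j) w ≤
      2916 / ε ^ 4 * choose n j ^ 2 * ∑ t ∈ ({0, ε ^ 2, -ε ^ 2} : Finset ℝ),
        noiseKernel n (expTilt (2 * (j / n) * ((n - j) / n)) t) w := by
  have hn' : (0 : ℝ) < n := Nat.cast_pos.2 hn
  set p : ℝ := j / n
  set q : ℝ := (n - j) / n
  have hpn : p * n = j := div_mul_cancel₀ _ hn'.ne'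
  have hp : ε ≤ p := (le_div_iff₀ hn').2 hj
  have hq : ε ≤ q := (le_div_iff₀ hn').2 (by linarith)
  have hpq : p + q = 1 := by rw [← add_div, add_sub_cancel, div_self hn'.ne']
  have hα0 : 0 ≤ 2 * p * q := by have := hε.trans_le hp; have := hε.trans_le hq; positivity
  have hα1 : 2 * p * q ≤ 1 := (two_mul_mul_le_one_half hpq).trans (by norm_num)
  have hkernel (t : ℝ) : 0 ≤ noiseKernel n (expTilt (2 * p * q) t) w :=
    noiseKernel_nonneg (expTilt_nonneg hα0 hα1 t) (expTilt_le_one hα0 hα1 t) w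
  rw [conv_sphereInd_self_apply]
  obtain hempty | ⟨z, hz⟩ := Finset.eq_empty_or_nonempty
    ({z | hammingNorm z = j ∧ hammingNorm (z + w) = j} : Finset (Fin n → ZMod 2))
  · rw [hempty, card_empty, Nat.cast_zero]
    exact mul_nonneg (by positivity) (sum_nonneg fun t _ => hkernel t)
  obtain ⟨hz, hzw⟩ := (mem_filter.1 hz).2
  obtain ⟨i, k, l, hw, rfl, hn_eq⟩ := exists_hammingNorm_eq_add_self hz hzw
  obtain ⟨t, ht, hle⟩ := exists_choose_mul_choose_le hε hp hq hpq (hn_eq ▸ hn)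
    (by rw [← hn_eq, hpn, Nat.cast_add])
  calc _ ≤ (choose (i + i) i * choose (k + l) k : ℝ) := by
        exact_mod_cast card_sphere_inter_translate_le hw hn_eq
    _ ≤ 2916 / ε ^ 4 * choose n (i + k) ^ 2 * noiseKernel n (expTilt (2 * p * q) t) w := by
        rwa [noiseKernel_eq_pow_mul_pow, hw, show n - (i + i) = k + l by omega, hn_eq]
    _ ≤ _ := by
        gcongr
        exact single_le_sum (fun t _ => hkernel t) ht

end SphereCorrelation

section Conclusion

open Nat (choose)

variable {n j : ℕ} {ε : ℝ} {f : (Fin n → ZMod 2) → ℝ}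

theorem innerP_conv_const_mul_sum {ι : Type*} (s : Finset ι) (c : ℝ)
    (f g : (Fin n → ZMod 2) → ℝ) (h : ι → (Fin n → ZMod 2) → ℝ) :
    innerP n f (conv n g fun w => c * ∑ t ∈ s, h t w) =
      c * ∑ t ∈ s, innerP n f (conv n g (h t)) := by
  simp only [innerP, conv, mul_sum]
  rw [sum_comm (s := s)]
  refine sum_congr rfl fun x _ => ?_
  rw [sum_comm (s := s)]
  exact sum_congr rfl fun y _ => sum_congr rfl fun t _ => by ring

theorem innerP_conv_noiseKernel_expTilt_le {α t : ℝ} (hε : 0 ≤ ε) (hα : ε ≤ α) (hα' : α ≤ 1 - ε)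
    (ht : |t| ≤ 1) (f : (Fin n → ZMod 2) → ℝ) :
    innerP n f (conv n f (noiseKernel n (expTilt α t))) ≤ pnormR n (2 - 2 * ε / 9) f ^ 2 := by
  have hlower := div_nine_le_expTilt (hε.trans hα) (by linarith) ht
  have hupper := one_sub_div_nine_le_one_sub_expTilt (hε.trans hα) (by linarith) ht
  rw [pow_two]
  exact innerP_conv_noiseKernel_le (by linarith)
    (abs_le.2 ⟨by linarith, by linarith⟩) f f

theorem innerP_conv_conv_sphereInd_le (hε : 0 < ε) (hn : 0 < n) (hj : ε * n ≤ j)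
    (hj' : (j : ℝ) ≤ (1 - ε) * n) (hf : 0 ≤ f) :
    innerP n f (conv n f (conv n (sphereInd n j) (sphereInd n j))) ≤
      8748 / ε ^ 4 * choose n j ^ 2 * pnormR n (2 - 2 * ε / 9) f ^ 2 := by
  have hn' : (0 : ℝ) < n := Nat.cast_pos.2 hn
  have hp : ε ≤ j / n := (le_div_iff₀ hn').2 hj
  have hq : ε ≤ (n - j) / n := (le_div_iff₀ hn').2 (by linarith)
  have hpq : (j / n + (n - j) / n : ℝ) = 1 := by rw [← add_div, add_sub_cancel, div_self hn'.ne']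
  set α : ℝ := 2 * (j / n) * ((n - j) / n)
  have hα : α ≤ 1 / 2 := two_mul_mul_le_one_half hpq
  have hεα : ε ≤ α := by nlinarith [mul_nonneg (sub_nonneg.2 hp) (sub_nonneg.2 hq)]
  have ht {t : ℝ} (ht : t ∈ ({0, ε ^ 2, -ε ^ 2} : Finset ℝ)) : |t| ≤ 1 := by
    have hε1 : ε ^ 2 ≤ 1 := pow_le_one₀ hε.le (by linarith)
    have hε0 := sq_nonneg ε
    simp only [mem_insert, mem_singleton] at ht
    rcases ht with rfl | rfl | rfl <;> rw [abs_le] <;> constructor <;> linarith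
  calc innerP n f (conv n f (conv n (sphereInd n j) (sphereInd n j)))
      ≤ innerP n f (conv n f fun w => 2916 / ε ^ 4 * choose n j ^ 2 *
          ∑ t ∈ ({0, ε ^ 2, -ε ^ 2} : Finset ℝ), noiseKernel n (expTilt α t) w) :=
        innerP_le_innerP_right hf (conv_le_conv_right hf (conv_sphereInd_self_le hε hn hj hj'))
    _ = 2916 / ε ^ 4 * choose n j ^ 2 * ∑ t ∈ ({0, ε ^ 2, -ε ^ 2} : Finset ℝ),
          innerP n f (conv n f (noiseKernel n (expTilt α t))) := innerP_conv_const_mul_sum _ _ _ _ _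
    _ ≤ 2916 / ε ^ 4 * choose n j ^ 2 * (3 * pnormR n (2 - 2 * ε / 9) f ^ 2) := by
        refine mul_le_mul_of_nonneg_left ?_ (by positivity)
        refine (sum_le_card_nsmul _ _ _ fun t h =>
          innerP_conv_noiseKernel_expTilt_le hε.le hεα (by linarith) (ht h) f).trans ?_
        rw [nsmul_eq_mul]
        gcongr
        exact_mod_cast card_le_three
    _ = 8748 / ε ^ 4 * choose n j ^ 2 * pnormR n (2 - 2 * ε / 9) f ^ 2 := by ring

variable {A : Finset (Fin n → ZMod 2)}

theorem indSet_nonneg (A : Finset (Fin n → ZMod 2)) : 0 ≤ indSet n A := fun x => by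
  unfold indSet
  split_ifs <;> simp

theorem innerP_indSet_self (A : Finset (Fin n → ZMod 2)) :
    innerP n (indSet n A) (indSet n A) = #A / 2 ^ n := by
  simp [innerP, indSet, div_eq_inv_mul]

theorem pnormR_indSet {p : ℝ} (hp : p ≠ 0) (A : Finset (Fin n → ZMod 2)) :
    pnormR n p (indSet n A) = (#A / 2 ^ n : ℝ) ^ (1 / p) := by
  have hpow (x : Fin n → ZMod 2) : |indSet n A x| ^ p = if x ∈ A then 1 else 0 := by
    unfold indSet
    split_ifs <;> simp [hp]
  simp [pnormR, hpow, div_eq_inv_mul, Real.rpow_neg]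

theorem innerP_conv_indSet_sphereInd_sq_le (hε : 0 < ε) (hn : 0 < n) (hj : ε * n ≤ j)
    (hj' : (j : ℝ) ≤ (1 - ε) * n) (hA : A.Nonempty) :
    innerP n (conv n (indSet n A) (indSet n A)) (sphereInd n j) ^ 2 ≤
      8748 / ε ^ 4 * (#A / 2 ^ n : ℝ) ^ (2 / (2 - 2 * ε / 9) - 1) *
        (choose n j * (#A / 2 ^ n : ℝ)) ^ 2 := by
  set μ : ℝ := #A / 2 ^ n
  set p : ℝ := 2 - 2 * ε / 9
  have hμ : 0 < μ := div_pos (Nat.cast_pos.2 hA.card_pos) (by positivity)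
  have hp : p ≠ 0 := by
    have : ε ≤ 1 - ε := le_of_mul_le_mul_right (hj.trans hj') (Nat.cast_pos.2 hn)
    exact (show 0 < 2 - 2 * ε / 9 by linarith).ne'
  calc innerP n (conv n (indSet n A) (indSet n A)) (sphereInd n j) ^ 2
      ≤ innerP n (indSet n A) (indSet n A) * innerP n (indSet n A)
          (conv n (indSet n A) (conv n (sphereInd n j) (sphereInd n j))) :=
        innerP_conv_self_sq_le _ _
    _ ≤ μ * (8748 / ε ^ 4 * choose n j ^ 2 * pnormR n p (indSet n A) ^ 2) := by
        rw [innerP_indSet_self]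
        gcongr
        exact innerP_conv_conv_sphereInd_le hε hn hj hj' (indSet_nonneg A)
    _ = 8748 / ε ^ 4 * μ ^ (2 / p - 1) * (choose n j * μ) ^ 2 := by
        have hnorm : (μ ^ (1 / p)) ^ 2 = μ ^ (2 / p - 1) * μ := by
          rw [← Real.rpow_mul_natCast hμ.le, Real.rpow_sub_one hμ.ne', div_mul_cancel₀ _ hμ.ne',
            Nat.cast_ofNat, one_div_mul_eq_div]
        rw [pnormR_indSet hp, hnorm]
        ring

theorem rpow_mul_rpow_le_of_sq_le {D σ lam μ : ℝ} (hD : 0 < D) (hσ : 0 < σ) (hlam : 0 ≤ lam)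
    (hμ : 0 ≤ μ) (h : lam ^ 2 ≤ D * μ ^ σ) : (D⁻¹) ^ (1 / σ) * lam ^ (2 / σ) ≤ μ := by
  calc (D⁻¹) ^ (1 / σ) * lam ^ (2 / σ) = (D⁻¹ * lam ^ 2) ^ (1 / σ) := by
        rw [Real.mul_rpow (by positivity) (by positivity), ← Real.rpow_natCast,
          ← Real.rpow_mul hlam, Nat.cast_ofNat, mul_one_div]
    _ ≤ (μ ^ σ) ^ (1 / σ) := by
        gcongr
        rwa [inv_mul_le_iff₀ hD]
    _ = μ := by rw [one_div, Real.rpow_rpow_inv hμ hσ.ne']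

end Conclusion

theorem sumset_covering_sphere_implies_large :
    ∀ ε : ℝ, 0 < ε → ε ≤ 1 / 2 →
      ∃ C₁ C₂ : ℝ, 0 < C₁ ∧ 0 < C₂ ∧
        ∀ n : ℕ, 1 ≤ n → ∀ lam : ℝ, 0 < lam →
          ∀ A : Finset (Fin n → ZMod 2), A.Nonempty →
            (∃ j : ℕ, ε * n ≤ j ∧ (j : ℝ) ≤ (1 - ε) * n ∧
              lam ≤ 2 ^ n * innerP n (conv n (indSet n A) (indSet n A)) (sphereInd n j) /
                      ((n.choose j : ℝ) * A.card)) →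
            C₁ * lam ^ C₂ * 2 ^ n ≤ (A.card : ℝ) := by
  intro ε hε hε2
  have hp : 0 < 2 - 2 * ε / 9 := by linarith
  have hσ : 0 < 2 / (2 - 2 * ε / 9) - 1 := by
    rw [sub_pos, one_lt_div hp]
    linarith
  refine ⟨(8748 / ε ^ 4)⁻¹ ^ (1 / (2 / (2 - 2 * ε / 9) - 1)), 2 / (2 / (2 - 2 * ε / 9) - 1),
    by positivity, by positivity, ?_⟩
  rintro n hn lam hlam A hA ⟨j, hj, hj', hcover⟩
  have hjn : j ≤ n := by
    have : (j : ℝ) ≤ n := hj'.trans (mul_le_of_le_one_left n.cast_nonneg (by linarith))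
    exact_mod_cast this
  have hchoose : (0 : ℝ) < n.choose j := Nat.cast_pos.2 (Nat.choose_pos hjn)
  have hcard : (0 : ℝ) < #A := Nat.cast_pos.2 hA.card_pos
  have hlower : lam * (n.choose j * (#A / 2 ^ n : ℝ)) ≤
      innerP n (conv n (indSet n A) (indSet n A)) (sphereInd n j) := by
    rw [le_div_iff₀ (by positivity)] at hcover
    rw [← mul_div_assoc, ← mul_div_assoc, div_le_iff₀' (by positivity)]
    exact hcover
  have hsq := (pow_le_pow_left₀ (by positivity) hlower 2).trans
    (innerP_conv_indSet_sphereInd_sq_le hε hn hj hj' hA)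
  rw [mul_pow lam] at hsq
  rw [← le_div_iff₀ (by positivity)]
  exact rpow_mul_rpow_le_of_sq_le (by positivity) hσ hlam.le (by positivity)
    (le_of_mul_le_mul_right hsq (by positivity))
end

section
/- For all n ≥ 1, all integers j with 0 ≤ j ≤ n/2, and all integers x with 0 ≤ x ≤ n/2 − √(j(n−j)): the Krawtchouk polynomial satisfies K_j(x) ≥ 0 and K_j(x)/K_j(0) ≤ (1 − 2j/n)^x. -/
open Finset

/-- The Krawtchouk polynomial `K_j` (for the cube `𝔽₂ⁿ`) evaluated at an
integer argument `x`: `K_j(x) = Σ_{k=0}^{j} (-1)^k C(x,k) C(n-x, j-k)`. -/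
def kraw (n j x : ℕ) : ℝ :=
  ∑ k ∈ Finset.range (j + 1),
    (-1 : ℝ) ^ k * (x.choose k : ℝ) * ((n - x).choose (j - k) : ℝ)

/-!
For fixed `j`, the generating function `(1 - X) ^ x * (1 + X) ^ (n - x)` shows that `f x = K_j(x)`
satisfies `(n - x) f(x + 1) + x f(x - 1) = b f(x)` with `b = n - 2j`. Let `m` be the given argument.
If `c` satisfies `x + (n - x) c² ≤ b c` for all `x < m`, the recurrence propagates
`f(x + 1) ≥ c f(x)`, so `f` stays positive up to `m`. The vertex `c = b / (2 (n - m))` of the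
quadratic satisfies this at `x = m` exactly when `4 m (n - m) ≤ b²`, which is the hypothesis
`m ≤ n/2 - √(j(n - j))` squared, and then also at every `x < m` because `c ≤ 1`. Once `f ≥ 0`,
the recurrence propagates `f(x + 1) ≤ (b / n) f(x)`, since this forces `(b / n) f(x + 1) ≤ f(x)`.
-/

section GeneratingFunction

open Polynomial

variable {R : Type*} [CommRing R]

lemma coeff_one_sub_X_pow (x k : ℕ) :
    ((1 - X : R[X]) ^ x).coeff k = (-1) ^ k * (x.choose k : R) := by
  have h : (1 - X : R[X]) ^ x = ((1 + X : R[X]) ^ x).comp (C (-1) * X) := by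
    simp [sub_eq_add_neg]
  rw [h, comp_C_mul_X_coeff, coeff_one_add_X_pow, mul_comm]

lemma coeff_X_mul_derivative {S : Type*} [CommSemiring S] (p : S[X]) (j : ℕ) :
    (X * derivative p).coeff j = j * p.coeff j := by
  cases j with
  | zero => simp
  | succ j => rw [coeff_X_mul, coeff_derivative, Nat.cast_succ, mul_comm]

lemma one_sub_X_pow_mul_one_add_X_pow_recurrence (x y : ℕ) :
    (y : R[X]) * ((1 - X) ^ (x + 1) * (1 + X) ^ (y - 1))
        + (x : R[X]) * ((1 - X) ^ (x - 1) * (1 + X) ^ (y + 1))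
      = ((x + y : ℕ) : R[X]) * ((1 - X) ^ x * (1 + X) ^ y)
        - 2 * (X * derivative ((1 - X : R[X]) ^ x * (1 + X) ^ y)) := by
  cases x <;> cases y <;>
    simp only [derivative_mul, derivative_pow, derivative_sub, derivative_one,
      derivative_X, Nat.add_sub_cancel, map_natCast, Nat.cast_add, Nat.cast_one, Nat.cast_zero,
      map_add, map_one, Nat.zero_sub, pow_zero] <;>
    ring

end GeneratingFunction

section Recurrence

variable {K : Type*} [Field K] [LinearOrder K] [IsStrictOrderedRing K]
  {f : ℕ → K} {n b c : K} {m : ℕ}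

lemma pos_and_mul_le_succ_of_recurrence (hmn : m ≤ n) (hc : 0 < c)
    (hquad : ∀ x < m, x + (n - x) * c ^ 2 ≤ b * c) (hf0 : 0 < f 0)
    (hrec : ∀ x < m, (n - x) * f (x + 1) + x * f (x - 1) = b * f x) :
    ∀ x < m, 0 < f x ∧ c * f x ≤ f (x + 1) := by
  intro x hx
  have hnx : 0 < n - x := sub_pos.2 ((Nat.cast_lt.2 hx).trans_le hmn)
  have hpred : 0 < f x ∧ x * (c * f (x - 1)) ≤ x * f x := by
    cases x with
    | zero => simpa using hf0
    | succ x =>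
      obtain ⟨hpos, hle⟩ := pos_and_mul_le_succ_of_recurrence hmn hc hquad hf0 hrec x (by lia)
      exact ⟨(mul_pos hc hpos).trans_le hle, mul_le_mul_of_nonneg_left hle (Nat.cast_nonneg _)⟩
  refine ⟨hpred.1, le_of_mul_le_mul_left ?_ (mul_pos hc hnx)⟩
  calc c * (n - x) * (c * f x) = (x + (n - x) * c ^ 2) * f x - x * f x := by ring
    _ ≤ b * c * f x - x * (c * f (x - 1)) :=
        sub_le_sub (mul_le_mul_of_nonneg_right (hquad x hx) hpred.1.le) hpred.2
    _ = c * (n - x) * f (x + 1) := by linear_combination -c * hrec x hx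

lemma exists_add_mul_sq_le_mul {t : K} (hb : 0 < b) (hbn : b ≤ n) (ht : 2 * t ≤ n)
    (hdisc : 4 * t * (n - t) ≤ b ^ 2) :
    ∃ c, 0 < c ∧ ∀ x ≤ t, x + (n - x) * c ^ 2 ≤ b * c := by
  have hnt : 0 < n - t := by linarith
  set c := b / (2 * (n - t)) with hc_def
  have hc : 0 < c := by positivity
  have hc_one : c ≤ 1 := by
    rw [hc_def, div_le_one (by positivity)]
    linarith
  have hvertex : 2 * (n - t) * c = b := mul_div_cancel₀ b (by positivity)
  have ht_le : t ≤ (n - t) * c ^ 2 := by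
    refine le_of_mul_le_mul_left ?_ (by positivity : 0 < 4 * (n - t))
    calc 4 * (n - t) * t = 4 * t * (n - t) := by ring
      _ ≤ b ^ 2 := hdisc
      _ = 4 * (n - t) * ((n - t) * c ^ 2) := by rw [← hvertex]; ring
  refine ⟨c, hc, fun x hx ↦ ?_⟩
  calc x + (n - x) * c ^ 2 = x * (1 - c ^ 2) + n * c ^ 2 := by ring
    _ ≤ t * (1 - c ^ 2) + n * c ^ 2 := by
        have : c ^ 2 ≤ 1 := pow_le_one₀ hc.le hc_one
        gcongr
    _ = t + (n - t) * c ^ 2 := by ring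
    _ ≤ (n - t) * c ^ 2 + (n - t) * c ^ 2 := by gcongr
    _ = b * c := by rw [← hvertex]; ring

lemma pos_of_recurrence (hb : 0 < b) (hbn : b ≤ n) (hm : 2 * m ≤ n)
    (hdisc : 4 * m * (n - m) ≤ b ^ 2) (hf0 : 0 < f 0)
    (hrec : ∀ x < m, (n - x) * f (x + 1) + x * f (x - 1) = b * f x) :
    ∀ x ≤ m, 0 < f x := by
  obtain ⟨c, hc, hquad⟩ := exists_add_mul_sq_le_mul hb hbn hm hdisc
  have hratio := pos_and_mul_le_succ_of_recurrence (by linarith) hc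
    (fun x hx ↦ hquad x (Nat.cast_le.2 hx.le)) hf0 hrec
  intro x hx
  cases x with
  | zero => exact hf0
  | succ x => exact (mul_pos hc (hratio x hx).1).trans_le (hratio x hx).2

lemma succ_le_div_mul_of_recurrence (hmn : m ≤ n) (hbn : b ≤ n) (hf : ∀ x ≤ m, 0 ≤ f x)
    (hrec : ∀ x < m, (n - x) * f (x + 1) + x * f (x - 1) = b * f x) :
    ∀ x < m, f (x + 1) ≤ b / n * f x := by
  intro x hx
  have hnx : 0 < n - x := sub_pos.2 ((Nat.cast_lt.2 hx).trans_le hmn)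
  have hn : 0 < n := hnx.trans_le (sub_le_self n (Nat.cast_nonneg x))
  have hratio : b / n ≤ 1 := (div_le_one hn).2 hbn
  have hpred : x * (b / n * f x) ≤ x * f (x - 1) := by
    cases x with
    | zero => simp
    | succ x =>
      refine mul_le_mul_of_nonneg_left ?_ (Nat.cast_nonneg _)
      calc b / n * f (x + 1) ≤ f (x + 1) := mul_le_of_le_one_left (hf _ hx.le) hratio
        _ ≤ b / n * f x := succ_le_div_mul_of_recurrence hmn hbn hf hrec x (by lia)
        _ ≤ f x := mul_le_of_le_one_left (hf _ (by lia)) hratio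
  refine le_of_mul_le_mul_left ?_ hnx
  calc (n - x) * f (x + 1) = b * f x - x * f (x - 1) := by linear_combination hrec x hx
    _ ≤ b * f x - x * (b / n * f x) := sub_le_sub_left hpred _
    _ = (n - x) * (b / n * f x) := by field_simp

end Recurrence

section Krawtchouk

variable {n j m : ℕ}

open Polynomial in
lemma kraw_eq_coeff (n j x : ℕ) :
    kraw n j x = ((1 - X : ℝ[X]) ^ x * (1 + X) ^ (n - x)).coeff j := by
  simp only [kraw, coeff_mul, Nat.sum_antidiagonal_eq_sum_range_succ_mk, coeff_one_sub_X_pow,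
    coeff_one_add_X_pow]

lemma kraw_zero (n j : ℕ) : kraw n j 0 = n.choose j := by
  simp [kraw_eq_coeff, Polynomial.coeff_one_add_X_pow]

-- At `x = 0` and `x = n` the out-of-range values `kraw n j (x ∓ 1)` have coefficient zero.
open Polynomial in
lemma kraw_recurrence {x : ℕ} (hx : x ≤ n) (j : ℕ) :
    ((n : ℝ) - x) * kraw n j (x + 1) + x * kraw n j (x - 1) = (n - 2 * j) * kraw n j x := by
  have hpred : (x : ℝ) * kraw n j (x - 1)
      = x * ((1 - X : ℝ[X]) ^ (x - 1) * (1 + X) ^ (n - x + 1)).coeff j := by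
    cases x with
    | zero => simp
    | succ x => rw [kraw_eq_coeff, show n - (x + 1 - 1) = n - (x + 1) + 1 by lia]
  have hcoeff := congrArg (coeff · j)
    (one_sub_X_pow_mul_one_add_X_pow_recurrence (R := ℝ) x (n - x))
  simp only [coeff_add, coeff_sub, coeff_natCast_mul, coeff_ofNat_mul, coeff_X_mul_derivative,
    Nat.add_sub_cancel' hx] at hcoeff
  rw [← Nat.cast_sub hx, hpred, kraw_eq_coeff, kraw_eq_coeff, ← Nat.sub_sub]
  linear_combination hcoeff

lemma kraw_zero_pos (hj : j ≤ n) : 0 < kraw n j 0 := by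
  rw [kraw_zero]
  exact_mod_cast Nat.choose_pos hj

lemma kraw_pos (hj : 2 * j ≤ n) (hm : 2 * m ≤ n)
    (hdisc : 4 * (m : ℝ) * (n - m) ≤ (n - 2 * j) ^ 2) : ∀ x ≤ m, 0 < kraw n j x := by
  have hf0 : 0 < kraw n j 0 := kraw_zero_pos (by lia)
  rcases m.eq_zero_or_pos with rfl | hm_pos
  · simpa using hf0
  have hj' : 2 * (j : ℝ) ≤ n := mod_cast hj
  have hm' : 2 * (m : ℝ) ≤ n := mod_cast hm
  have hm_pos' : (0 : ℝ) < m := mod_cast hm_pos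
  have hb_sq : 0 < ((n : ℝ) - 2 * j) ^ 2 :=
    (mul_pos (by positivity) (by linarith)).trans_le hdisc
  have hb : 0 < (n : ℝ) - 2 * j := (sub_nonneg.2 hj').lt_of_ne' (sq_pos_iff.1 hb_sq)
  exact pos_of_recurrence hb (sub_le_self _ (by positivity)) hm' hdisc hf0
    fun x hx ↦ kraw_recurrence (by lia) j

lemma kraw_le_pow_mul_kraw_zero (hj : 2 * j ≤ n) (hm : m ≤ n) (hf : ∀ x ≤ m, 0 ≤ kraw n j x) :
    kraw n j m ≤ (((n : ℝ) - 2 * j) / n) ^ m * kraw n j 0 := by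
  have hb : 0 ≤ (n : ℝ) - 2 * j := sub_nonneg.2 (mod_cast hj)
  exact le_geom (by positivity) m <|
    succ_le_div_mul_of_recurrence (mod_cast hm) (sub_le_self _ (by positivity)) hf
      fun x hx ↦ kraw_recurrence (by lia) j

end Krawtchouk

lemma four_mul_mul_sub_le_sq_of_le_half_sub_sqrt {n j t : ℝ} (ht : t ≤ n / 2 - √(j * (n - j))) :
    4 * t * (n - t) ≤ (n - 2 * j) ^ 2 := by
  have hsq : j * (n - j) ≤ (n / 2 - t) ^ 2 := (Real.sqrt_le_iff.1 (by linarith)).2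
  linear_combination 4 * hsq

theorem krawtchouk_ratio_bound_before_first_root :
    ∀ n : ℕ, 1 ≤ n → ∀ j x : ℕ,
      (j : ℝ) ≤ (n : ℝ) / 2 →
      (x : ℝ) ≤ (n : ℝ) / 2 - Real.sqrt ((j : ℝ) * ((n : ℝ) - (j : ℝ))) →
      0 ≤ kraw n j x ∧ kraw n j x / kraw n j 0 ≤ (1 - 2 * (j : ℝ) / n) ^ x := by
  intro n hn j x hj hx
  have hj' : 2 * j ≤ n := by
    have : 2 * (j : ℝ) ≤ n := by linarith
    exact_mod_cast this
  have hx' : 2 * x ≤ n := by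
    have : 2 * (x : ℝ) ≤ n := by linarith [Real.sqrt_nonneg ((j : ℝ) * (n - j))]
    exact_mod_cast this
  have hpos := kraw_pos hj' hx' (four_mul_mul_sub_le_sq_of_le_half_sub_sqrt hx)
  have hn0 : (n : ℝ) ≠ 0 := Nat.cast_ne_zero.2 (by lia)
  refine ⟨(hpos x le_rfl).le, ?_⟩
  rw [div_le_iff₀ (hpos 0 x.zero_le), one_sub_div hn0]
  exact kraw_le_pow_mul_kraw_zero hj' (by lia) fun y hy ↦ (hpos y hy).le
end

section
/- Let α, δ₀, C > 0 and let f : [0, δ₀] → ℝ be continuous with f(0) = 0, differentiable with derivative (one-sided at 0) bounded in absolute value by C, and satisfying f(δ) − α·h(δ) < 0 for all δ ∈ (0, δ₀]. Then sup over n ≥ 1 of the maximum over δ ∈ [0, δ₀] of e^{n(f(δ) − α h(δ))}·√(nδ) is finite. -/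
/-- The natural-log binary entropy function `h(t) = -t ln t - (1-t) ln(1-t)`
(with `h(0) = 0`, using the convention `ln 0 = 0`). -/
noncomputable def binEnt (t : ℝ) : ℝ := -t * Real.log t - (1 - t) * Real.log (1 - t)

/-!
The gap `g δ = α * h δ - f δ` is positive on `(0, δ₀]`, and near `0` it dominates a multiple of `δ`,
because `f` grows at most linearly there while `h δ / δ ≥ -log δ → ∞`. By compactness of `[ε, δ₀]`,
`g δ ≥ c * δ` on all of `(0, δ₀]` for some `c > 0`. Hence the quantity to be bounded is at most
`exp (-c * x) * √x` with `x = n * δ`, a bounded function of `x ≥ 0`.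
-/

section

open Set Filter Topology

theorem exp_neg_mul_mul_sqrt_le {c x : ℝ} (hc : 0 < c) (hx : 0 ≤ x) :
    Real.exp (-(c * x)) * √x ≤ √(Real.exp (-1) / (2 * c)) := by
  apply Real.le_sqrt_of_sq_le
  rw [le_div_iff₀ (by positivity)]
  calc (Real.exp (-(c * x)) * √x) ^ 2 * (2 * c)
      = 2 * c * x * Real.exp (-(2 * c * x)) := by
        rw [mul_pow, Real.sq_sqrt hx, ← Real.exp_nat_mul]
        push_cast
        ring_nf
    _ ≤ Real.exp (-1) := Real.mul_exp_neg_le_exp_neg_one _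

theorem exists_pos_forall_mul_le_of_eventually {g : ℝ → ℝ} {b k : ℝ}
    (hg : ContinuousOn g (Ioc 0 b)) (hpos : ∀ x ∈ Ioc 0 b, 0 < g x)
    (hk : 0 < k) (hlin : ∀ᶠ x in 𝓝[>] 0, k * x ≤ g x) :
    ∃ c > 0, ∀ x ∈ Ioc 0 b, c * x ≤ g x := by
  obtain ⟨ε, hε, hnear⟩ := mem_nhdsGT_iff_exists_Ioo_subset.1 hlin
  have hsub : Icc ε b ⊆ Ioc 0 b := fun x hx => ⟨lt_of_lt_of_le hε hx.1, hx.2⟩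
  obtain ⟨m, hm, hfar⟩ : ∃ m > 0, ∀ x ∈ Icc ε b, m ≤ g x / x :=
    isCompact_Icc.exists_forall_le'
      ((hg.mono hsub).div continuousOn_id fun x hx => (hsub hx).1.ne')
      fun x hx => div_pos (hpos x (hsub hx)) (hsub hx).1
  refine ⟨min k m, lt_min hk hm, fun x hx => ?_⟩
  rcases lt_or_ge x ε with hxε | hεx
  · exact (mul_le_mul_of_nonneg_right (min_le_left k m) hx.1.le).trans (hnear ⟨hx.1, hxε⟩)
  · rw [← le_div_iff₀ hx.1]
    exact (min_le_right k m).trans (hfar x ⟨hεx, hx.2⟩)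

theorem exists_forall_exp_neg_mul_mul_sqrt_le {g : ℝ → ℝ} {b k : ℝ}
    (hg : ContinuousOn g (Ioc 0 b)) (hpos : ∀ x ∈ Ioc 0 b, 0 < g x)
    (hk : 0 < k) (hlin : ∀ᶠ x in 𝓝[>] 0, k * x ≤ g x) :
    ∃ M, ∀ t ≥ 0, ∀ x ∈ Icc 0 b, Real.exp (-(t * g x)) * √(t * x) ≤ M := by
  obtain ⟨c, hc, hcg⟩ := exists_pos_forall_mul_le_of_eventually hg hpos hk hlin
  refine ⟨√(Real.exp (-1) / (2 * c)), fun t ht x hx => ?_⟩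
  rcases hx.1.eq_or_lt with rfl | hx0
  · simp
  · have hgap : c * (t * x) ≤ t * g x := by
      rw [mul_left_comm]
      exact mul_le_mul_of_nonneg_left (hcg x ⟨hx0, hx.2⟩) ht
    calc Real.exp (-(t * g x)) * √(t * x)
        ≤ Real.exp (-(c * (t * x))) * √(t * x) := by gcongr
      _ ≤ √(Real.exp (-1) / (2 * c)) := exp_neg_mul_mul_sqrt_le hc (mul_nonneg ht hx.1)

theorem eventually_le_mul_of_hasDerivWithinAt_zero {f : ℝ → ℝ} {f' C : ℝ}
    (hf : HasDerivWithinAt f f' (Ioi 0) 0) (hf0 : f 0 = 0) (hC : f' < C) :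
    ∀ᶠ x in 𝓝[>] 0, f x ≤ C * x := by
  filter_upwards [hf.limsup_slope_le' self_notMem_Ioi hC, self_mem_nhdsWithin] with x hslope hx
  rw [slope_def_field, hf0, sub_zero, sub_zero] at hslope
  exact ((div_lt_iff₀ hx).1 hslope).le

theorem binEnt_eq_binEntropy : binEnt = Real.binEntropy := by
  funext t
  simp only [binEnt, Real.binEntropy, Real.log_inv]
  ring

theorem continuous_binEnt : Continuous binEnt :=
  binEnt_eq_binEntropy ▸ Real.binEntropy_continuous

theorem negMulLog_le_binEnt {t : ℝ} (ht₀ : 0 ≤ t) (ht₁ : t ≤ 1) :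
    Real.negMulLog t ≤ binEnt t := by
  rw [binEnt_eq_binEntropy, Real.binEntropy_eq_negMulLog_add_negMulLog_one_sub]
  exact le_add_of_nonneg_right (Real.negMulLog_nonneg (sub_nonneg.2 ht₁) (sub_le_self 1 ht₀))

theorem tendsto_binEnt_div_self_nhdsGT_zero :
    Tendsto (fun t => binEnt t / t) (𝓝[>] 0) atTop := by
  refine tendsto_atTop_mono' _ ?_ (tendsto_neg_atBot_atTop.comp Real.tendsto_log_nhdsGT_zero)
  filter_upwards [Ioc_mem_nhdsGT zero_lt_one] with t ht
  calc -Real.log t = Real.negMulLog t / t := by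
        rw [Real.negMulLog, neg_mul_comm, mul_div_cancel_left₀ _ ht.1.ne']
    _ ≤ binEnt t / t := div_le_div_of_nonneg_right (negMulLog_le_binEnt ht.1.le ht.2) ht.1.le

theorem eventually_mul_le_mul_binEnt_sub {f : ℝ → ℝ} {α C : ℝ} (hα : 0 < α)
    (hf : ∀ᶠ δ in 𝓝[>] 0, f δ ≤ C * δ) (k : ℝ) :
    ∀ᶠ δ in 𝓝[>] 0, k * δ ≤ α * binEnt δ - f δ := by
  filter_upwards [hf, self_mem_nhdsWithin,
    (tendsto_binEnt_div_self_nhdsGT_zero.const_mul_atTop hα).eventually_ge_atTop (k + C)]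
    with δ hfδ hδ hent
  have : (k + C) * δ ≤ α * binEnt δ := by rwa [← mul_div_assoc, le_div_iff₀ hδ] at hent
  linarith

theorem exp_entropy_gap_sqrt_bounded_general {α δ₀ C : ℝ} {f : ℝ → ℝ} (hα : 0 < α)
    (hf : ContinuousOn f (Ioc 0 δ₀)) (hlin : ∀ᶠ δ in 𝓝[>] 0, f δ ≤ C * δ)
    (hneg : ∀ δ ∈ Ioc 0 δ₀, f δ - α * binEnt δ < 0) :
    ∃ M : ℝ, ∀ t : ℝ, 0 ≤ t → ∀ δ ∈ Icc 0 δ₀,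
      Real.exp (t * (f δ - α * binEnt δ)) * √(t * δ) ≤ M := by
  have hgap : ContinuousOn (fun δ => α * binEnt δ - f δ) (Ioc 0 δ₀) :=
    (continuous_binEnt.const_mul α).continuousOn.sub hf
  obtain ⟨M, hM⟩ := exists_forall_exp_neg_mul_mul_sqrt_le hgap
    (fun δ hδ => sub_pos.2 (sub_neg.1 (hneg δ hδ))) one_pos
    (eventually_mul_le_mul_binEnt_sub hα hlin 1)
  refine ⟨M, fun t ht δ hδ => ?_⟩
  simpa only [← mul_neg, neg_sub] using hM t ht δ hδ

end

theorem exp_entropy_gap_sqrt_bounded :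
    ∀ α δ₀ C : ℝ, 0 < α → 0 < δ₀ → 0 < C →
      ∀ f f' : ℝ → ℝ,
        ContinuousOn f (Set.Icc 0 δ₀) → f 0 = 0 →
        (∀ δ ∈ Set.Icc (0 : ℝ) δ₀,
          HasDerivWithinAt f (f' δ) (Set.Icc 0 δ₀) δ ∧ |f' δ| ≤ C) →
        (∀ δ ∈ Set.Ioc (0 : ℝ) δ₀, f δ - α * binEnt δ < 0) →
        ∃ M : ℝ, ∀ n : ℕ, 1 ≤ n → ∀ δ ∈ Set.Icc (0 : ℝ) δ₀,
          Real.exp (n * (f δ - α * binEnt δ)) * Real.sqrt (n * δ) ≤ M := by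
  intro α δ₀ C hα hδ₀ _ f f' hf hf0 hderiv hneg
  have hderiv0 : HasDerivWithinAt f (f' 0) (Set.Ioi 0) 0 :=
    (hderiv 0 (Set.left_mem_Icc.2 hδ₀.le)).1.mono_of_mem_nhdsWithin (Icc_mem_nhdsGT hδ₀)
  obtain ⟨M, hM⟩ := exp_entropy_gap_sqrt_bounded_general hα (hf.mono Set.Ioc_subset_Icc_self)
    (eventually_le_mul_of_hasDerivWithinAt_zero hderiv0 hf0 (lt_add_one _)) hneg
  exact ⟨M, fun n _ => hM n n.cast_nonneg⟩
end

section
/- For all n ≥ 1, all integers j with 0 ≤ j ≤ n/2, and all integers x with n·ξ_crit(j/n) ≤ x ≤ n·(1 − ξ_crit(j/n)), where ξ_crit(δ) = 1/2 − √(δ(1−δ)), the Krawtchouk polynomial satisfies |K_j(x)| ≤ exp{ (n/2) · ( h(j/n) + ln 2 − h(x/n) ) }. -/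
/-!
For real `a`, `b`, the value `K_j(x)` times `b ^ j * a ^ (n - j)` is the `j`-th coefficient of
`(a - b z) ^ x * (a + b z) ^ (n - x)`, so by Parseval its absolute value is at most the maximum
modulus of this polynomial on the unit circle. There the parallelogram law gives
`|a - b z|² + |a + b z|² = 2 (a² + b²)`, and among nonnegative `u`, `v` with a given sum `s`,
weighted AM-GM bounds `u ^ x * v ^ (n - x)` by `s ^ n * exp (-n h(x/n))`. The choice
`a² = 1 - j/n`, `b² = j/n` turns `(b ^ j * a ^ (n - j))²` into `exp (-n h(j/n))`.
-/

open Finset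

section Coefficients

open Polynomial

/-- The homogeneous generating polynomial `(a - b z) ^ x * (a + b z) ^ (n - x)` of the Krawtchouk
values `K_j(x)`, as a polynomial in `z`. Both coefficients `a` and `b` are kept, so that neither of
the extreme cases `j = 0` and `j = n` is a degenerate one. -/
noncomputable def krawGen (n x : ℕ) (a b : ℂ) : ℂ[X] :=
  (C a - C b * X) ^ x * (C a + C b * X) ^ (n - x)

lemma coeff_C_add_C_mul_X_pow {R : Type*} [CommSemiring R] (a b : R) (n k : ℕ) :
    ((C a + C b * X) ^ n).coeff k = n.choose k * b ^ k * a ^ (n - k) := by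
  have hcomp : (C a + C b * X) ^ n = ((X + C a) ^ n).comp (C b * X) := by
    simp [add_comm]
  rw [hcomp, comp_C_mul_X_coeff, coeff_X_add_C_pow]
  ring

lemma coeff_krawGen {n j x : ℕ} (hx : x ≤ n) (a b : ℂ) :
    (krawGen n x a b).coeff j = kraw n j x * b ^ j * a ^ (n - j) := by
  have hsub : C a - C b * X = C a + C (-b) * X := by simp [sub_eq_add_neg]
  rw [krawGen, hsub, coeff_mul, Nat.sum_antidiagonal_eq_sum_range_succ_mk, kraw]
  push_cast
  rw [sum_mul, sum_mul]
  refine sum_congr rfl fun k hk ↦ ?_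
  have hkj : k ≤ j := mem_range_succ_iff.mp hk
  rw [coeff_C_add_C_mul_X_pow, coeff_C_add_C_mul_X_pow]
  rcases lt_or_ge x k with hxk | hkx
  · simp [Nat.choose_eq_zero_of_lt hxk]
  rcases lt_or_ge (n - x) (j - k) with hlt | hle
  · simp [Nat.choose_eq_zero_of_lt hlt]
  have hb : b ^ j = b ^ k * b ^ (j - k) := by rw [← pow_add, Nat.add_sub_cancel' hkj]
  have ha : a ^ (n - j) = a ^ (x - k) * a ^ (n - x - (j - k)) := by
    rw [← pow_add]
    congr 1
    omega
  rw [neg_pow, ha, hb]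
  ring

lemma sq_norm_coeff_le_of_forall_norm_eq_one {p : ℂ[X]} {M : ℝ}
    (hM : ∀ z : ℂ, ‖z‖ = 1 → ‖p.eval z‖ ^ 2 ≤ M) (j : ℕ) : ‖p.coeff j‖ ^ 2 ≤ M := by
  have hint : CircleIntegrable (fun z ↦ ‖p.eval z‖ ^ 2) 0 1 :=
    (p.continuous.norm.pow 2).continuousOn.circleIntegrable zero_le_one
  calc ‖p.coeff j‖ ^ 2 ≤ ∑ i ∈ p.support, ‖p.coeff i‖ ^ 2 := by
        by_cases hj : j ∈ p.support
        · exact single_le_sum (f := fun i ↦ ‖p.coeff i‖ ^ 2) (fun _ _ ↦ sq_nonneg _) hj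
        · rw [notMem_support_iff.mp hj, norm_zero, zero_pow two_ne_zero]
          exact sum_nonneg fun _ _ ↦ sq_nonneg _
    _ = Real.circleAverage (fun z ↦ ‖p.eval z‖ ^ 2) 0 1 := p.sum_sq_norm_coeff_eq_circleAverage
    _ ≤ M := Real.circleAverage_mono_on_of_le_circle hint fun z hz ↦ hM z (by simpa using hz)

end Coefficients

lemma exp_mul_log_self {t : ℝ} (ht : 0 ≤ t) : Real.exp (t * Real.log t) = t ^ t := by
  rcases ht.eq_or_lt with rfl | ht
  · simp
  · rw [Real.rpow_def_of_pos ht, mul_comm]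

lemma exp_neg_binEnt {p : ℝ} (hp0 : 0 ≤ p) (hp1 : p ≤ 1) :
    Real.exp (-binEnt p) = p ^ p * (1 - p) ^ (1 - p) := by
  rw [← exp_mul_log_self hp0, ← exp_mul_log_self (sub_nonneg.mpr hp1), ← Real.exp_add, binEnt]
  ring_nf

lemma rpow_self_mul_div_rpow {p u : ℝ} (hp : 0 ≤ p) (hu : 0 ≤ u) : p ^ p * (u / p) ^ p = u ^ p := by
  rcases eq_or_ne p 0 with rfl | hp0
  · simp
  · rw [← Real.mul_rpow hp (div_nonneg hu hp), mul_div_cancel₀ u hp0]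

lemma rpow_mul_rpow_one_sub_le_add_mul_exp_neg_binEnt {p u v : ℝ} (hp0 : 0 ≤ p) (hp1 : p ≤ 1)
    (hu : 0 ≤ u) (hv : 0 ≤ v) :
    u ^ p * v ^ (1 - p) ≤ (u + v) * Real.exp (-binEnt p) := by
  have hq0 : 0 ≤ 1 - p := sub_nonneg.mpr hp1
  have amgm : (u / p) ^ p * (v / (1 - p)) ^ (1 - p) ≤ u + v :=
    calc (u / p) ^ p * (v / (1 - p)) ^ (1 - p) ≤ p * (u / p) + (1 - p) * (v / (1 - p)) :=
          Real.geom_mean_le_arith_mean2_weighted hp0 hq0 (div_nonneg hu hp0) (div_nonneg hv hq0)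
            (add_sub_cancel p 1)
      _ = u / p * p + v / (1 - p) * (1 - p) := by ring
      _ ≤ u + v :=
          add_le_add (mul_le_of_le_div₀ hu hp0 le_rfl) (mul_le_of_le_div₀ hv hq0 le_rfl)
  calc u ^ p * v ^ (1 - p)
      = ((u / p) ^ p * (v / (1 - p)) ^ (1 - p)) * Real.exp (-binEnt p) := by
        rw [exp_neg_binEnt hp0 hp1, ← rpow_self_mul_div_rpow hp0 hu,
          ← rpow_self_mul_div_rpow hq0 hv]
        ring
    _ ≤ (u + v) * Real.exp (-binEnt p) := mul_le_mul_of_nonneg_right amgm (Real.exp_nonneg _)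

lemma natCast_div_mem_Icc {k n : ℕ} (hk : k ≤ n) : (k / n : ℝ) ∈ Set.Icc 0 1 :=
  unitInterval.div_mem k.cast_nonneg n.cast_nonneg (Nat.cast_le.mpr hk)

lemma rpow_div_mul_rpow_one_sub_div_pow {n x : ℕ} (hn : n ≠ 0) (hx : x ≤ n) {u v : ℝ}
    (hu : 0 ≤ u) (hv : 0 ≤ v) :
    (u ^ (x / n : ℝ) * v ^ (1 - x / n : ℝ)) ^ n = u ^ x * v ^ (n - x) := by
  have hn' : (n : ℝ) ≠ 0 := Nat.cast_ne_zero.mpr hn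
  rw [one_sub_div hn', ← Nat.cast_sub hx, mul_pow, ← Real.rpow_mul_natCast hu,
    ← Real.rpow_mul_natCast hv, div_mul_cancel₀ _ hn', div_mul_cancel₀ _ hn', Real.rpow_natCast,
    Real.rpow_natCast]

lemma exp_neg_mul_binEnt_div {n x : ℕ} (hn : n ≠ 0) (hx : x ≤ n) :
    Real.exp (-(n * binEnt (x / n))) = (x / n : ℝ) ^ x * (1 - x / n : ℝ) ^ (n - x) := by
  obtain ⟨hp0, hp1⟩ := natCast_div_mem_Icc hx
  rw [← mul_neg, Real.exp_nat_mul, exp_neg_binEnt hp0 hp1,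
    rpow_div_mul_rpow_one_sub_div_pow hn hx hp0 (sub_nonneg.mpr hp1)]

lemma pow_mul_pow_sub_le_add_pow_mul_exp_neg_mul_binEnt {n x : ℕ} (hn : n ≠ 0) (hx : x ≤ n)
    {u v : ℝ} (hu : 0 ≤ u) (hv : 0 ≤ v) :
    u ^ x * v ^ (n - x) ≤ (u + v) ^ n * Real.exp (-(n * binEnt (x / n))) := by
  obtain ⟨hp0, hp1⟩ := natCast_div_mem_Icc hx
  rw [← rpow_div_mul_rpow_one_sub_div_pow hn hx hu hv, ← mul_neg, Real.exp_nat_mul, ← mul_pow]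
  exact pow_le_pow_left₀ (by positivity)
    (rpow_mul_rpow_one_sub_le_add_mul_exp_neg_binEnt hp0 hp1 hu hv) n

lemma sq_norm_eval_krawGen_le {n x : ℕ} (hn : n ≠ 0) (hx : x ≤ n) (a b : ℂ) {z : ℂ}
    (hz : ‖z‖ = 1) :
    ‖(krawGen n x a b).eval z‖ ^ 2 ≤
      (2 * (‖a‖ ^ 2 + ‖b‖ ^ 2)) ^ n * Real.exp (-(n * binEnt (x / n))) := by
  have hpar : ‖a - b * z‖ ^ 2 + ‖a + b * z‖ ^ 2 = 2 * (‖a‖ ^ 2 + ‖b‖ ^ 2) := by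
    have h := parallelogram_law_with_norm ℝ a (b * z)
    rw [norm_mul, hz, mul_one] at h
    linarith
  calc ‖(krawGen n x a b).eval z‖ ^ 2
      = (‖a - b * z‖ ^ 2) ^ x * (‖a + b * z‖ ^ 2) ^ (n - x) := by
        simp only [krawGen, Polynomial.eval_mul, Polynomial.eval_pow, Polynomial.eval_sub,
          Polynomial.eval_add, Polynomial.eval_C, Polynomial.eval_X, norm_mul, norm_pow]
        ring
    _ ≤ (‖a - b * z‖ ^ 2 + ‖a + b * z‖ ^ 2) ^ n * Real.exp (-(n * binEnt (x / n))) :=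
        pow_mul_pow_sub_le_add_pow_mul_exp_neg_mul_binEnt hn hx (sq_nonneg _) (sq_nonneg _)
    _ = _ := by rw [hpar]

lemma sq_kraw_mul_pow_mul_pow_le {n j x : ℕ} (hn : n ≠ 0) (hx : x ≤ n) (a b : ℝ) :
    kraw n j x ^ 2 * ((b ^ 2) ^ j * (a ^ 2) ^ (n - j)) ≤
      (2 * (a ^ 2 + b ^ 2)) ^ n * Real.exp (-(n * binEnt (x / n))) := by
  have h := sq_norm_coeff_le_of_forall_norm_eq_one
    (fun z hz ↦ sq_norm_eval_krawGen_le hn hx (a : ℂ) (b : ℂ) hz) j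
  simp only [coeff_krawGen hx, norm_mul, norm_pow, Complex.norm_real, Real.norm_eq_abs,
    mul_pow _ _ 2, pow_right_comm _ _ 2, sq_abs] at h
  rwa [← mul_assoc]

lemma sq_kraw_mul_exp_neg_mul_binEnt_le {n j x : ℕ} (hn : n ≠ 0) (hj : j ≤ n) (hx : x ≤ n) :
    kraw n j x ^ 2 * Real.exp (-(n * binEnt (j / n))) ≤
      2 ^ n * Real.exp (-(n * binEnt (x / n))) := by
  obtain ⟨hd0, hd1⟩ := natCast_div_mem_Icc hj
  have h := sq_kraw_mul_pow_mul_pow_le (j := j) hn hx √(1 - j / n) √(j / n)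
  rwa [Real.sq_sqrt hd0, Real.sq_sqrt (sub_nonneg.mpr hd1), sub_add_cancel, mul_one,
    ← exp_neg_mul_binEnt_div hn hj] at h

theorem krawtchouk_bound_in_critical_strip_general {n j x : ℕ} (hn : n ≠ 0) (hj : j ≤ n)
    (hx : x ≤ n) :
    |kraw n j x| ≤
      Real.exp ((n : ℝ) / 2 * (binEnt ((j : ℝ) / n) + Real.log 2 - binEnt ((x : ℝ) / n))) := by
  refine abs_le_of_sq_le_sq ?_ (Real.exp_nonneg _)
  calc kraw n j x ^ 2
      ≤ 2 ^ n * Real.exp (-(n * binEnt (x / n))) / Real.exp (-(n * binEnt (j / n))) :=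
        (le_div_iff₀ (Real.exp_pos _)).mpr (sq_kraw_mul_exp_neg_mul_binEnt_le hn hj hx)
    _ = Real.exp (n * Real.log 2 + -(n * binEnt (x / n)) - -(n * binEnt (j / n))) := by
        rw [Real.exp_sub, Real.exp_add, Real.exp_nat_mul, Real.exp_log two_pos]
    _ = Real.exp (n / 2 * (binEnt (j / n) + Real.log 2 - binEnt (x / n))) ^ 2 := by
        rw [← Real.exp_nat_mul]
        congr 1
        push_cast
        ring

theorem krawtchouk_bound_in_critical_strip :
    ∀ n : ℕ, 1 ≤ n → ∀ j : ℕ, (j : ℝ) ≤ (n : ℝ) / 2 → ∀ x : ℕ, x ≤ n →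
      (n : ℝ) * (1 / 2 - Real.sqrt (((j : ℝ) / n) * (1 - (j : ℝ) / n))) ≤ (x : ℝ) →
      (x : ℝ) ≤ (n : ℝ) * (1 - (1 / 2 - Real.sqrt (((j : ℝ) / n) * (1 - (j : ℝ) / n)))) →
      |kraw n j x| ≤
        Real.exp ((n : ℝ) / 2 * (binEnt ((j : ℝ) / n) + Real.log 2 - binEnt ((x : ℝ) / n))) := by
  intro n hn j hj x hx _ _
  have hjn : (j : ℝ) ≤ n := hj.trans (half_le_self n.cast_nonneg)
  exact krawtchouk_bound_in_critical_strip_general (Nat.one_le_iff_ne_zero.mp hn)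
    (Nat.cast_le.mp hjn) hx
end
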